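/- arXiv:1411.6963 — 3 statements merged into one kernel-verified Lean document; each statement's English description precedes it below -/
import Mathlib

section
/- For positive integers a, b with a ≤ b, the quadratic form f^{a,b}_c(x,y,z,w) = a·x² + b·y² + c·(z² + z·w + w²) represents every nonnegative integer (i.e., for every n ∈ ℕ₀ there exist integers x, y, z, w with n = f^{a,b}_c(x,y,z,w)) if and only if the triple (a,b,c) is one of: (1,b,1) with b ∈ {1,2,3,4,5,6}; (2,b,1) with b ∈ {2,3,4,5,6,7,8,9,10}; (1,b,2) with b ∈ {1,2,3,4,5}; (1,2,3); or (1,2,4). -/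
/-!
The forms `z² + zw + w²` and `y² + 3z²` have the same values, so the positive results reduce to two
ternary forms: `x² + y² + 3z²`, which represents every `n ≥ 0` not of the form `9^k (9m + 6)`, and
`x² + 2y² + 6z²`, which represents every `n ≥ 0` not of the form `4^k (8m + 5)`. It then suffices to
subtract one suitable value of the remaining variable from `n`. A representation of `2n` by
`x² + 2y² + 6z²` has `x` even, which handles `2x² + y² + 3z²`.

The ternary forms are treated by the method of Gauss and Dirichlet for sums of three squares. A
positive definite Gram matrix `[[c, b, 0], [b, a, s], [0, s, n]]` of determinant 3 represents `n`.
With `e = ac - b²` the determinant is `ne - s²c`, so one needs `c = (ne - 3) / s²` such that `-e` is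
a square modulo `c`. Dirichlet's theorem provides `e = gm` for which `c = γp` with `p` prime and `g`
and `γ` small; quadratic reciprocity evaluates the Jacobi symbol of `-e` modulo `p`, which depends
only on residue classes modulo 24. By Hermite reduction, the only classes of determinant 3 are
`⟨1⟩ ⊕ ⟨1⟩ ⊕ ⟨3⟩` and `⟨1⟩ ⊕ [[2, 1], [1, 2]]`, the latter having the same values as
`x² + 2y² + 6z²`, and they are told apart by the residues modulo 3 of their principal minors.

Conversely, the values 1, 2, 3, 5, 6 and 10 exclude all other coefficients.
-/

open Matrix
open scoped NumberTheorySymbols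

/-! ### Splitting off the first variable -/

section Corner

variable {R : Type*} [CommRing R] {n : ℕ}

/-- The Schur complement of the corner entry `A 0 0`, multiplied by `A 0 0` so that no division
occurs. For symmetric `A` it is the Gram matrix of the quadratic form left over when the first
variable is removed from `A 0 0 • A` by completing the square. -/
def cornerSchur (A : Matrix (Fin (n + 1)) (Fin (n + 1)) R) : Matrix (Fin n) (Fin n) R :=
  A 0 0 • A.submatrix Fin.succ Fin.succ -
    vecMulVec (fun i ↦ A i.succ 0) (fun j ↦ A 0 j.succ)

/-- The block matrix `[[1, w], [0, U]]`: a change of basis that keeps the first basis vector. -/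
def bordered (w : Fin n → R) (U : Matrix (Fin n) (Fin n) R) :
    Matrix (Fin (n + 1)) (Fin (n + 1)) R :=
  of (Fin.cons (Fin.cons 1 w) fun i ↦ Fin.cons 0 (U i))

lemma cornerSchur_apply (A : Matrix (Fin (n + 1)) (Fin (n + 1)) R) (i j : Fin n) :
    cornerSchur A i j = A 0 0 * A i.succ j.succ - A i.succ 0 * A 0 j.succ := by
  simp [cornerSchur, vecMulVec_apply]

lemma cornerSchur_transpose (A : Matrix (Fin (n + 1)) (Fin (n + 1)) R) :
    cornerSchur Aᵀ = (cornerSchur A)ᵀ := by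
  ext i j
  simp [cornerSchur_apply, mul_comm]

lemma eq_bordered_zero_cornerSchur {A : Matrix (Fin (n + 1)) (Fin (n + 1)) R} (hsymm : A.IsSymm)
    (hcorner : A 0 0 = 1) (hrow : ∀ j : Fin n, A 0 j.succ = 0) :
    A = bordered 0 (cornerSchur A) := by
  have hcol (i : Fin n) : A i.succ 0 = 0 := by rw [← hrow i, hsymm.apply]
  ext i j
  cases i using Fin.cases <;> cases j using Fin.cases <;>
    simp [bordered, cornerSchur_apply, hcorner, hrow, hcol]

lemma det_bordered (w : Fin n → R) (U : Matrix (Fin n) (Fin n) R) :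
    (bordered w U).det = U.det := by
  have hblock : (bordered w U).submatrix Fin.succ Fin.succ = U := by
    ext i j
    simp [bordered]
  rw [det_succ_column_zero, Fin.sum_univ_succ, Fin.succAbove_zero, hblock]
  simp [bordered]

lemma mul_bordered_zero (A : Matrix (Fin (n + 1)) (Fin (n + 1)) R) (w : Fin n → R)
    (U : Matrix (Fin n) (Fin n) R) (i : Fin (n + 1)) :
    (A * bordered w U) i 0 = A i 0 := by
  simp [mul_apply, Fin.sum_univ_succ, bordered]

lemma mul_bordered_succ (A : Matrix (Fin (n + 1)) (Fin (n + 1)) R) (w : Fin n → R)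
    (U : Matrix (Fin n) (Fin n) R) (i : Fin (n + 1)) (j : Fin n) :
    (A * bordered w U) i j.succ = A i 0 * w j + ∑ k, A i k.succ * U k j := by
  simp [mul_apply, Fin.sum_univ_succ, bordered]

lemma bordered_transpose_mul (A : Matrix (Fin (n + 1)) (Fin (n + 1)) R) (w : Fin n → R)
    (U : Matrix (Fin n) (Fin n) R) :
    (bordered w U)ᵀ * A = (Aᵀ * bordered w U)ᵀ := by
  rw [transpose_mul, transpose_transpose]

/-- Chió's condensation formula. -/
lemma corner_mul_det_cornerSchur (A : Matrix (Fin (n + 1)) (Fin (n + 1)) R) :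
    A 0 0 * (cornerSchur A).det = A 0 0 ^ n * A.det := by
  let P : Matrix (Fin (n + 1)) (Fin (n + 1)) R := bordered (fun j ↦ -A 0 j.succ) (A 0 0 • 1)
  have hP : P.det = A 0 0 ^ n := by simp [P, det_bordered]
  have hrow (j : Fin n) : (A * P) 0 j.succ = 0 := by
    simp [P, mul_bordered_succ, one_apply, mul_comm]
  have hblock : (A * P).submatrix Fin.succ Fin.succ = cornerSchur A := by
    ext i j
    simp [P, mul_bordered_succ, one_apply, cornerSchur_apply]
    ring
  have hdet : (A * P).det = A 0 0 * (cornerSchur A).det := by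
    simp [det_succ_row_zero (A * P), Fin.sum_univ_succ, hrow, P, mul_bordered_zero, ← hblock]
  rw [← hdet, det_mul, hP, mul_comm]

lemma cornerSchur_mul_bordered (A : Matrix (Fin (n + 1)) (Fin (n + 1)) R) (w : Fin n → R)
    (U : Matrix (Fin n) (Fin n) R) :
    cornerSchur (A * bordered w U) = cornerSchur A * U := by
  ext i j
  simp only [mul_apply (M := cornerSchur A), cornerSchur_apply, mul_bordered_zero,
    mul_bordered_succ, sub_mul, Finset.sum_sub_distrib, mul_assoc, ← Finset.mul_sum]
  ring

lemma cornerSchur_bordered_congr (A : Matrix (Fin (n + 1)) (Fin (n + 1)) R) (w : Fin n → R)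
    (U : Matrix (Fin n) (Fin n) R) :
    cornerSchur ((bordered w U)ᵀ * A * bordered w U) = Uᵀ * cornerSchur A * U := by
  rw [cornerSchur_mul_bordered, bordered_transpose_mul, cornerSchur_transpose,
    cornerSchur_mul_bordered, cornerSchur_transpose, transpose_mul, transpose_transpose]

lemma bordered_congr_zero_zero (A : Matrix (Fin (n + 1)) (Fin (n + 1)) R) (w : Fin n → R)
    (U : Matrix (Fin n) (Fin n) R) :
    ((bordered w U)ᵀ * A * bordered w U) 0 0 = A 0 0 := by
  rw [mul_bordered_zero, bordered_transpose_mul, transpose_apply, mul_bordered_zero,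
    transpose_apply]

lemma bordered_congr_zero_succ (A : Matrix (Fin (n + 1)) (Fin (n + 1)) R) (w : Fin n → R)
    (U : Matrix (Fin n) (Fin n) R) (j : Fin n) :
    ((bordered w U)ᵀ * A * bordered w U) 0 j.succ = A 0 0 * w j + ∑ k, A 0 k.succ * U k j := by
  simp only [mul_bordered_succ, bordered_transpose_mul, transpose_apply, mul_bordered_zero]

lemma corner_mul_dotProduct_mulVec {A : Matrix (Fin (n + 1)) (Fin (n + 1)) R} (hA : A.IsSymm)
    (x : Fin (n + 1) → R) :
    A 0 0 * (x ⬝ᵥ A *ᵥ x) =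
      (A *ᵥ x) 0 ^ 2 + Fin.tail x ⬝ᵥ cornerSchur A *ᵥ Fin.tail x := by
  set t := Fin.tail x with ht
  set b : Fin n → R := fun j ↦ A 0 j.succ with hb
  set D := A.submatrix Fin.succ Fin.succ with hD
  have hcol (i : Fin n) : A i.succ 0 = b i := hA.apply _ _
  have hzero : (A *ᵥ x) 0 = A 0 0 * x 0 + b ⬝ᵥ t := by
    simp [mulVec, dotProduct, Fin.sum_univ_succ, hb, ht, Fin.tail]
  have hsucc : Fin.tail (A *ᵥ x) = x 0 • b + D *ᵥ t := by
    ext i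
    simp [mulVec, dotProduct, Fin.sum_univ_succ, hcol, hD, ht, Fin.tail, mul_comm]
  have hform : x ⬝ᵥ A *ᵥ x = x 0 * (A *ᵥ x) 0 + t ⬝ᵥ Fin.tail (A *ᵥ x) := by
    simp [dotProduct, Fin.sum_univ_succ, ht, Fin.tail]
  have hschur : t ⬝ᵥ cornerSchur A *ᵥ t = A 0 0 * (t ⬝ᵥ D *ᵥ t) - (b ⬝ᵥ t) ^ 2 := by
    simp [cornerSchur, hcol, ← hb, ← hD, sub_mulVec, smul_mulVec, vecMulVec_mulVec,
      dotProduct_sub, dotProduct_smul, dotProduct_comm t b, sq]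
  rw [hform, hsucc, hschur, hzero]
  simp only [dotProduct_add, dotProduct_smul, dotProduct_comm t b, smul_eq_mul]
  ring

end Corner

lemma posDef_iff_isSymm_and_dotProduct_pos {R m : Type*} [CommRing R] [PartialOrder R]
    [StarRing R] [TrivialStar R] [Fintype m] {A : Matrix m m R} :
    A.PosDef ↔ A.IsSymm ∧ ∀ x ≠ 0, 0 < x ⬝ᵥ A *ᵥ x := by
  rw [posDef_iff_dotProduct_mulVec, isHermitian_iff_isSymm]
  simp only [star_trivial, ne_eq]

section PosDef

variable {R : Type*} [CommRing R] [LinearOrder R] [IsStrictOrderedRing R] [StarRing R]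
  [TrivialStar R] {n : ℕ} {A : Matrix (Fin (n + 1)) (Fin (n + 1)) R}

lemma posDef_cornerSchur (hA : A.PosDef) : (cornerSchur A).PosDef := by
  have hcorner : 0 < A 0 0 := hA.diag_pos
  obtain ⟨hsymm, hpos⟩ := posDef_iff_isSymm_and_dotProduct_pos.1 hA
  refine posDef_iff_isSymm_and_dotProduct_pos.2 ⟨?_, fun t ht ↦ ?_⟩
  · rw [Matrix.IsSymm, ← cornerSchur_transpose, hsymm.eq]
  -- This choice of the first coordinate kills the completed square.
  let x : Fin (n + 1) → R := Fin.cons (-∑ j, A 0 j.succ * t j) (A 0 0 • t)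
  have hx : x ≠ 0 := fun h ↦ ht <| by
    ext i
    simpa [x, hcorner.ne'] using congrFun h i.succ
  have hzero : (A *ᵥ x) 0 = 0 := by
    simp [x, mulVec, dotProduct, Fin.sum_univ_succ, Finset.mul_sum, mul_left_comm]
  have hsplit : A 0 0 * (x ⬝ᵥ A *ᵥ x) = A 0 0 * (A 0 0 * (t ⬝ᵥ cornerSchur A *ᵥ t)) := by
    rw [corner_mul_dotProduct_mulVec hsymm, hzero,
      show Fin.tail x = A 0 0 • t from Fin.tail_cons _ _]
    simp [mulVec_smul]
  have := hpos x hx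
  rw [mul_left_cancel₀ hcorner.ne' hsplit] at this
  exact pos_of_mul_pos_right this hcorner.le

lemma posDef_of_cornerSchur (hsymm : A.IsSymm) (hcorner : 0 < A 0 0)
    (hschur : (cornerSchur A).PosDef) : A.PosDef := by
  refine posDef_iff_isSymm_and_dotProduct_pos.2
    ⟨hsymm, fun x hx ↦ pos_of_mul_pos_right (a := A 0 0) ?_ hcorner.le⟩
  rw [corner_mul_dotProduct_mulVec hsymm]
  by_cases ht : Fin.tail x = 0
  · have hzero : (A *ᵥ x) 0 = A 0 0 * x 0 := by
      simp [mulVec, dotProduct, Fin.sum_univ_succ, show ∀ i, x (Fin.succ i) = 0 from congrFun ht]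
    have hx0 : x 0 ≠ 0 := fun h ↦ hx <| by
      rw [← Fin.cons_self_tail x, ht, h]
      exact Matrix.cons_zero_zero
    rw [hzero, ht]
    simp only [mulVec_zero, dotProduct_zero, add_zero]
    positivity
  · have := (posDef_iff_isSymm_and_dotProduct_pos.1 hschur).2 _ ht
    positivity

end PosDef

/-! ### Hermite reduction -/

/-- Congruence of integral Gram matrices: `A` and `B` describe the same quadratic form in two
bases of the same lattice. -/
def UnimodularEquiv {m : Type*} [Fintype m] [DecidableEq m] (A B : Matrix m m ℤ) : Prop :=
  ∃ U : Matrix m m ℤ, IsUnit U.det ∧ Uᵀ * A * U = B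

namespace UnimodularEquiv

variable {m : Type*} [Fintype m] [DecidableEq m] {A B C : Matrix m m ℤ}

lemma refl (A : Matrix m m ℤ) : UnimodularEquiv A A := ⟨1, by simp, by simp⟩

lemma symm (h : UnimodularEquiv A B) : UnimodularEquiv B A := by
  obtain ⟨U, hU, rfl⟩ := h
  refine ⟨U⁻¹, isUnit_nonsing_inv_det U hU, ?_⟩
  rw [transpose_nonsing_inv, ← mul_assoc, ← mul_assoc,
    nonsing_inv_mul _ (isUnit_det_transpose U hU), one_mul, mul_assoc,
    mul_nonsing_inv U hU, mul_one]

lemma trans (hAB : UnimodularEquiv A B) (hBC : UnimodularEquiv B C) : UnimodularEquiv A C := by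
  obtain ⟨U, hU, rfl⟩ := hAB
  obtain ⟨V, hV, rfl⟩ := hBC
  exact ⟨U * V, by simpa using hU.mul hV, by simp only [transpose_mul, mul_assoc]⟩

lemma det_eq (h : UnimodularEquiv A B) : B.det = A.det := by
  obtain ⟨U, hU, rfl⟩ := h
  rw [det_mul, det_mul, det_transpose, mul_right_comm, Int.isUnit_mul_self hU, one_mul]

lemma posDef (h : UnimodularEquiv A B) (hA : A.PosDef) : B.PosDef := by
  obtain ⟨U, hU, rfl⟩ := h
  have := hA.conjTranspose_mul_mul_same
    (mulVec_injective_of_isUnit ((isUnit_iff_isUnit_det U).2 hU))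
  rwa [conjTranspose_eq_transpose_of_trivial] at this

lemma submatrix_perm (A : Matrix m m ℤ) (σ : Equiv.Perm m) :
    UnimodularEquiv A (A.submatrix σ σ) := by
  refine ⟨(1 : Matrix m m ℤ).submatrix id σ, ?_, ?_⟩
  · simp [det_permute']
  · ext i j
    simp [mul_apply, one_apply]

lemma bordered_congr {n : ℕ} (A : Matrix (Fin (n + 1)) (Fin (n + 1)) ℤ) (w : Fin n → ℤ)
    {U : Matrix (Fin n) (Fin n) ℤ} (hU : IsUnit U.det) :
    UnimodularEquiv A ((bordered w U)ᵀ * A * bordered w U) :=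
  ⟨bordered w U, by rwa [det_bordered], rfl⟩

end UnimodularEquiv

lemma exists_two_mul_abs_add_mul_le {a : ℤ} (ha : 0 < a) (t : ℤ) :
    ∃ k : ℤ, 2 * |a * k + t| ≤ a := by
  refine ⟨-((2 * t + a) / (2 * a)), ?_⟩
  have h1 := Int.emod_add_mul_ediv (2 * t + a) (2 * a)
  have h2 := Int.emod_nonneg (2 * t + a) (b := 2 * a) (by lia)
  have h3 := Int.emod_lt_of_pos (2 * t + a) (b := 2 * a) (by lia)
  suffices |2 * (a * -((2 * t + a) / (2 * a)) + t)| ≤ a by rwa [abs_mul, abs_two] at this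
  rw [abs_le]
  constructor <;> linarith

lemma exists_unimodularEquiv_corner_minimal {n : ℕ} {A : Matrix (Fin (n + 1)) (Fin (n + 1)) ℤ}
    (hA : A.PosDef) :
    ∃ B, UnimodularEquiv A B ∧ ∀ C, UnimodularEquiv A C → B 0 0 ≤ C 0 0 := by
  obtain ⟨B, hB, hmin⟩ := exists_minimalFor_of_wellFoundedLT (UnimodularEquiv A)
    (fun B ↦ (B 0 0).toNat) ⟨A, .refl A⟩
  refine ⟨B, hB, fun C hC ↦ ?_⟩
  have hpos : 0 < C 0 0 := (hC.posDef hA).diag_pos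
  have := @hmin C hC
  lia

lemma exists_unimodularEquiv_bordered_row_reduced {n : ℕ}
    {B : Matrix (Fin (n + 1)) (Fin (n + 1)) ℤ} (hcorner : 0 < B 0 0)
    {S : Matrix (Fin n) (Fin n) ℤ} (hS : UnimodularEquiv (cornerSchur B) S) :
    ∃ C, UnimodularEquiv B C ∧ C 0 0 = B 0 0 ∧ cornerSchur C = S ∧
      ∀ j : Fin n, 2 * |C 0 j.succ| ≤ C 0 0 := by
  obtain ⟨U, hU, rfl⟩ := hS
  choose w hw using fun j : Fin n ↦
    exists_two_mul_abs_add_mul_le hcorner (∑ k, B 0 k.succ * U k j)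
  refine ⟨_, .bordered_congr B w hU, bordered_congr_zero_zero B w U,
    cornerSchur_bordered_congr B w U, fun j ↦ ?_⟩
  rw [bordered_congr_zero_zero, bordered_congr_zero_succ]
  exact hw j

lemma three_mul_corner_sq_le {n : ℕ} {A : Matrix (Fin (n + 2)) (Fin (n + 2)) ℤ}
    (hA : A.IsSymm) (hcorner : 0 ≤ A 0 0) (hdiag : A 0 0 ≤ A 1 1)
    (hrow : 2 * |A 0 1| ≤ A 0 0) : 3 * A 0 0 ^ 2 ≤ 4 * cornerSchur A 0 0 := by
  have hschur : cornerSchur A 0 0 = A 0 0 * A 1 1 - A 0 1 ^ 2 := by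
    rw [cornerSchur_apply, Fin.succ_zero_eq_one, hA.apply 0 1, sq]
  have hsq : (2 * |A 0 1|) ^ 2 ≤ A 0 0 ^ 2 := by gcongr
  have hmul : A 0 0 * A 0 0 ≤ A 0 0 * A 1 1 := by gcongr
  rw [mul_pow, sq_abs] at hsq
  linarith

lemma hermite_bound_step {n e : ℕ} {a σ Δ d : ℤ} (ha : 0 < a) (hσ : 3 * a ^ 2 ≤ 4 * σ)
    (hΔ : a * Δ = a ^ n * d) (hbound : 3 ^ e * σ ^ n ≤ 4 ^ e * Δ) :
    3 ^ (e + n) * a ^ (n + 1) ≤ 4 ^ (e + n) * d := by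
  refine le_of_mul_le_mul_left ?_ (pow_pos ha n)
  calc a ^ n * (3 ^ (e + n) * a ^ (n + 1))
      = 3 ^ e * a * (3 * a ^ 2) ^ n := by ring
    _ ≤ 3 ^ e * a * (4 * σ) ^ n := by gcongr
    _ = 4 ^ n * a * (3 ^ e * σ ^ n) := by ring
    _ ≤ 4 ^ n * a * (4 ^ e * Δ) := by gcongr
    _ = 4 ^ (e + n) * (a * Δ) := by ring
    _ = a ^ n * (4 ^ (e + n) * d) := by rw [hΔ]; ring

/-- Hermite's inequality `a ≤ (4 / 3) ^ (n / 2) * d ^ (1 / (n + 1))` between the corner `a` and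
the determinant `d` of a suitable basis, raised to the power `n + 1`. -/
theorem exists_unimodularEquiv_hermite_reduced {n : ℕ}
    {A : Matrix (Fin (n + 1)) (Fin (n + 1)) ℤ} (hA : A.PosDef) :
    ∃ B, UnimodularEquiv A B ∧ (∀ j : Fin n, 2 * |B 0 j.succ| ≤ B 0 0) ∧
      3 ^ (n + 1).choose 2 * B 0 0 ^ (n + 1) ≤ 4 ^ (n + 1).choose 2 * A.det := by
  induction n with
  | zero => exact ⟨A, .refl A, fun j ↦ j.elim0, by simp [det_unique]⟩
  | succ n ih =>
    obtain ⟨B, hAB, hmin⟩ := exists_unimodularEquiv_corner_minimal hA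
    have hB : B.PosDef := hAB.posDef hA
    have hcorner : 0 < B 0 0 := hB.diag_pos
    obtain ⟨S, hBS, -, hbound⟩ := ih (posDef_cornerSchur hB)
    obtain ⟨C, hBC, hC00, rfl, hrow⟩ := exists_unimodularEquiv_bordered_row_reduced hcorner hBS
    have hC : UnimodularEquiv A C := hAB.trans hBC
    have hCsymm : C.IsSymm := isHermitian_iff_isSymm.1 (hC.posDef hA).isHermitian
    have hdiag : C 0 0 ≤ C 1 1 := by
      simpa [hC00] using hmin _ (hC.trans (.submatrix_perm C (Equiv.swap 0 1)))
    refine ⟨C, hC, hrow, ?_⟩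
    have hchoose : (n + 1 + 1).choose 2 = (n + 1).choose 2 + (n + 1) := by
      rw [Nat.choose_succ_succ', Nat.choose_one_right, add_comm]
    rw [hchoose, hC00]
    refine hermite_bound_step hcorner ?_ ?_ hbound
    · rw [← hC00]
      exact three_mul_corner_sq_le hCsymm (by rw [hC00]; exact hcorner.le) hdiag (hrow 0)
    · rw [corner_mul_det_cornerSchur, hAB.det_eq]

/-! ### Ternary forms of determinant 3 -/

lemma binary_unimodularEquiv_of_det_eq_three {A : Matrix (Fin 2) (Fin 2) ℤ} (hA : A.PosDef)
    (hdet : A.det = 3) :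
    UnimodularEquiv A !![1, 0; 0, 3] ∨ UnimodularEquiv A !![2, 1; 1, 2] := by
  obtain ⟨B, hAB, hrow, hbound⟩ := exists_unimodularEquiv_hermite_reduced hA
  have hB : B.PosDef := hAB.posDef hA
  have hcorner : 0 < B 0 0 := hB.diag_pos
  have hsymm : B 1 0 = B 0 1 := (isHermitian_iff_isSymm.1 hB.isHermitian).apply 0 1
  have hdetB : B 0 0 * B 1 1 - B 0 1 ^ 2 = 3 := by
    rw [← hdet, ← hAB.det_eq, det_fin_two, hsymm, sq]
  have hle : B 0 0 ≤ 2 := by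
    rw [hdet] at hbound
    norm_num at hbound
    nlinarith
  have hB_eq : B = !![B 0 0, B 0 1; B 0 1, B 1 1] := by
    conv_lhs => rw [eta_fin_two B, hsymm]
  have hrow' : 2 * |B 0 1| ≤ B 0 0 := hrow 0
  have hlower := neg_abs_le (B 0 1)
  have hupper := le_abs_self (B 0 1)
  rw [hB_eq] at hAB
  obtain h00 | h00 : B 0 0 = 1 ∨ B 0 0 = 2 := by lia
  · have h01 : B 0 1 = 0 := by lia
    have h11 : B 1 1 = 3 := by simpa [h00, h01] using hdetB
    exact .inl (by rwa [h00, h01, h11] at hAB)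
  · obtain h01 | h01 | h01 : B 0 1 = 0 ∨ B 0 1 = 1 ∨ B 0 1 = -1 := by lia
    · rw [h00, h01] at hdetB
      lia
    all_goals
      have h11 : B 1 1 = 2 := by rw [h00, h01] at hdetB; lia
      rw [h00, h01, h11] at hAB
      right
    · exact hAB
    · exact hAB.trans ⟨!![1, 0; 0, -1], by simp, by decide⟩

lemma ternary_unimodularEquiv_of_det_eq_three {A : Matrix (Fin 3) (Fin 3) ℤ} (hA : A.PosDef)
    (hdet : A.det = 3) :
    UnimodularEquiv A (bordered 0 !![1, 0; 0, 3]) ∨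
      UnimodularEquiv A (bordered 0 !![2, 1; 1, 2]) := by
  obtain ⟨B, hAB, -, hbound⟩ := exists_unimodularEquiv_hermite_reduced hA
  have hB : B.PosDef := hAB.posDef hA
  have hpos : 0 < B 0 0 := hB.diag_pos
  have hcorner : B 0 0 = 1 := by
    have : ¬ 2 ≤ B 0 0 := fun h ↦ by
      have := pow_le_pow_left₀ (by norm_num) h 3
      rw [hdet] at hbound
      norm_num [Nat.choose] at hbound
      lia
    lia
  have hschur : (cornerSchur B).det = 3 := by
    simpa [hcorner, hAB.det_eq, hdet] using corner_mul_det_cornerSchur B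
  have hsplit {S : Matrix (Fin 2) (Fin 2) ℤ} (hS : UnimodularEquiv (cornerSchur B) S) :
      UnimodularEquiv A (bordered 0 S) := by
    obtain ⟨C, hBC, hC00, rfl, hrow⟩ := exists_unimodularEquiv_bordered_row_reduced hpos hS
    have hAC : UnimodularEquiv A C := hAB.trans hBC
    have hrow_zero (j : Fin 2) : C 0 j.succ = 0 :=
      Int.abs_lt_one_iff.1 (by linarith [hrow j])
    rwa [← eq_bordered_zero_cornerSchur (isHermitian_iff_isSymm.1 (hAC.posDef hA).isHermitian)
      (hC00.trans hcorner) hrow_zero]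
  exact (binary_unimodularEquiv_of_det_eq_three (posDef_cornerSchur hB) hschur).imp hsplit hsplit

/-- `n` is an integral value of the diagonal ternary form `a * x ^ 2 + b * y ^ 2 + c * z ^ 2`. -/
def DiagRep (a b c n : ℤ) : Prop := ∃ x y z : ℤ, n = a * x ^ 2 + b * y ^ 2 + c * z ^ 2

/-- The completed square `(y + z / 2) ^ 2 + 3 * (z / 2) ^ 2`, in each of the three bases in which
the second variable is even. -/
lemma exists_sq_add_three_mul_sq (y z : ℤ) :
    ∃ u v : ℤ, y ^ 2 + y * z + z ^ 2 = u ^ 2 + 3 * v ^ 2 := by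
  rcases Int.even_or_odd' y with ⟨k, rfl | rfl⟩
  · exact ⟨z + k, k, by ring⟩
  · rcases Int.even_or_odd' z with ⟨l, rfl | rfl⟩
    · exact ⟨2 * k + 1 + l, l, by ring⟩
    · exact ⟨k - l, k + l + 1, by ring⟩

lemma sq_emod_three (x : ℤ) : x ^ 2 % 3 = 0 ∨ x ^ 2 % 3 = 1 := by
  have h : x % 3 = 0 ∨ x % 3 = 1 ∨ x % 3 = 2 := by lia
  rcases h with h | h | h <;> simp [sq, Int.mul_emod, h]

lemma transpose_mul_bordered_zero_mul_apply (p q r : ℤ) (U : Matrix (Fin 3) (Fin 3) ℤ)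
    (i j : Fin 3) :
    (Uᵀ * bordered 0 !![p, q; q, r] * U) i j = U 0 i * U 0 j + p * (U 1 i * U 1 j) +
      q * (U 1 i * U 2 j + U 2 i * U 1 j) + r * (U 2 i * U 2 j) := by
  simp [mul_apply, Fin.sum_univ_succ, bordered]
  ring

namespace UnimodularEquiv

variable {A : Matrix (Fin 3) (Fin 3) ℤ}

lemma diagRep_one_one_three (h : UnimodularEquiv A (bordered 0 !![1, 0; 0, 3])) (i : Fin 3) :
    DiagRep 1 1 3 (A i i) := by
  obtain ⟨U, -, rfl⟩ := h.symm
  exact ⟨U 0 i, U 1 i, U 2 i, by rw [transpose_mul_bordered_zero_mul_apply]; ring⟩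

lemma diagRep_one_two_six (h : UnimodularEquiv A (bordered 0 !![2, 1; 1, 2])) (i : Fin 3) :
    DiagRep 1 2 6 (A i i) := by
  obtain ⟨U, -, rfl⟩ := h.symm
  obtain ⟨y, z, hyz⟩ := exists_sq_add_three_mul_sq (U 1 i) (U 2 i)
  exact ⟨U 0 i, y, z, by
    rw [transpose_mul_bordered_zero_mul_apply]; linear_combination 2 * hyz⟩

/-- Modulo 3 the form is `x ^ 2 + y ^ 2`. -/
lemma minor_emod_three_ne_two (h : UnimodularEquiv A (bordered 0 !![1, 0; 0, 3])) (i j : Fin 3) :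
    (A i i * A j j - A i j ^ 2) % 3 ≠ 2 := by
  obtain ⟨U, -, hU⟩ := h.symm
  have hminor : A i i * A j j - A i j ^ 2 = (U 0 i * U 1 j - U 1 i * U 0 j) ^ 2 +
      3 * ((U 0 i * U 2 j - U 2 i * U 0 j) ^ 2 + (U 1 i * U 2 j - U 2 i * U 1 j) ^ 2) := by
    simp only [← hU, transpose_mul_bordered_zero_mul_apply]
    ring
  have := sq_emod_three (U 0 i * U 1 j - U 1 i * U 0 j)
  lia

/-- Modulo 3 the form is `x ^ 2 + 2 * (y - z) ^ 2`. -/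
lemma minor_emod_three_ne_one (h : UnimodularEquiv A (bordered 0 !![2, 1; 1, 2])) (i j : Fin 3) :
    (A i i * A j j - A i j ^ 2) % 3 ≠ 1 := by
  obtain ⟨U, -, hU⟩ := h.symm
  have hminor : A i i * A j j - A i j ^ 2 =
      2 * (U 0 i * (U 1 j - U 2 j) - (U 1 i - U 2 i) * U 0 j) ^ 2 +
      3 * (2 * (U 0 i * U 1 j - U 1 i * U 0 j) * (U 0 i * U 2 j - U 2 i * U 0 j) +
        (U 1 i * U 2 j - U 2 i * U 1 j) ^ 2) := by
    simp only [← hU, transpose_mul_bordered_zero_mul_apply]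
    ring
  have := sq_emod_three (U 0 i * (U 1 j - U 2 j) - (U 1 i - U 2 i) * U 0 j)
  lia

end UnimodularEquiv

lemma diagRep_one_one_three_of_minor {A : Matrix (Fin 3) (Fin 3) ℤ} (hA : A.PosDef)
    (hdet : A.det = 3) {i j : Fin 3} (hminor : (A i i * A j j - A i j ^ 2) % 3 = 1) (k : Fin 3) :
    DiagRep 1 1 3 (A k k) :=
  ((ternary_unimodularEquiv_of_det_eq_three hA hdet).resolve_right
    fun h ↦ h.minor_emod_three_ne_one i j hminor).diagRep_one_one_three k

lemma diagRep_one_two_six_of_minor {A : Matrix (Fin 3) (Fin 3) ℤ} (hA : A.PosDef)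
    (hdet : A.det = 3) {i j : Fin 3} (hminor : (A i i * A j j - A i j ^ 2) % 3 = 2) (k : Fin 3) :
    DiagRep 1 2 6 (A k k) :=
  ((ternary_unimodularEquiv_of_det_eq_three hA hdet).resolve_left
    fun h ↦ h.minor_emod_three_ne_two i j hminor).diagRep_one_two_six k

section Sylvester

variable {R : Type*} [CommRing R] [LinearOrder R] [IsStrictOrderedRing R] [StarRing R]
  [TrivialStar R]

lemma posDef_fin_one {a : R} (ha : 0 < a) : (!![a] : Matrix (Fin 1) (Fin 1) R).PosDef := by
  refine posDef_of_cornerSchur (by ext i j; fin_cases i; fin_cases j; rfl) ha ?_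
  exact posDef_iff_isSymm_and_dotProduct_pos.2
    ⟨Subsingleton.elim _ _, fun x hx ↦ absurd (Subsingleton.elim x 0) hx⟩

lemma posDef_fin_two {a b c : R} (ha : 0 < a) (hdet : 0 < a * c - b ^ 2) :
    (!![a, b; b, c] : Matrix (Fin 2) (Fin 2) R).PosDef := by
  refine posDef_of_cornerSchur (by ext i j; fin_cases i <;> fin_cases j <;> rfl) ha ?_
  convert posDef_fin_one hdet
  ext i j
  fin_cases i
  fin_cases j
  simp [cornerSchur_apply, sq]

lemma posDef_tridiagonal {a b c n s : R} (hc : 0 < c) (hminor : 0 < a * c - b ^ 2)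
    (hdet : 0 < n * (a * c - b ^ 2) - s ^ 2 * c) :
    (!![c, b, 0; b, a, s; 0, s, n] : Matrix (Fin 3) (Fin 3) R).PosDef := by
  refine posDef_of_cornerSchur (by ext i j; fin_cases i <;> fin_cases j <;> rfl) hc ?_
  have hschur : cornerSchur !![c, b, 0; b, a, s; 0, s, n] =
      !![a * c - b ^ 2, c * s; c * s, c * n] := by
    ext i j
    fin_cases i <;> fin_cases j <;> simp [cornerSchur_apply]
    ring
  rw [hschur]
  exact posDef_fin_two hminor (by convert mul_pos hc hdet using 1; ring)

end Sylvester

/-- The entry `a` is chosen so that the leading minor is `e`; the determinant is then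
`n * e - s ^ 2 * c`. -/
lemma exists_tridiagonal_posDef {n e c s b : ℤ} (he : 0 < e) (hc : 0 < c)
    (hdet : n * e - s ^ 2 * c = 3) (hdvd : c ∣ b ^ 2 + e) :
    ∃ a, a * c - b ^ 2 = e ∧ (!![c, b, 0; b, a, s; 0, s, n] : Matrix (Fin 3) (Fin 3) ℤ).PosDef ∧
      (!![c, b, 0; b, a, s; 0, s, n] : Matrix (Fin 3) (Fin 3) ℤ).det = 3 := by
  obtain ⟨a, ha⟩ := hdvd
  have hac : a * c - b ^ 2 = e := by linear_combination -ha
  refine ⟨a, hac, posDef_tridiagonal hc (by rwa [hac]) (by rw [hac, hdet]; norm_num), ?_⟩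
  rw [det_fin_three]
  simp
  linear_combination hdet + n * hac

lemma diagRep_one_one_three_of_dvd {n e c s b : ℤ} (he : 0 < e) (hc : 0 < c)
    (hdet : n * e - s ^ 2 * c = 3) (hdvd : c ∣ b ^ 2 + e) (he3 : e % 3 = 1) :
    DiagRep 1 1 3 n := by
  obtain ⟨a, hac, hA, hdetA⟩ := exists_tridiagonal_posDef he hc hdet hdvd
  refine diagRep_one_one_three_of_minor hA hdetA (i := 1) (j := 0) ?_ 2
  simpa [hac] using he3

/-- If `3 ∣ n`, the minor that excludes `x ^ 2 + y ^ 2 + 3 * z ^ 2` is `a * n - 1`. -/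
lemma diagRep_one_two_six_of_dvd {n e c b : ℤ} (he : 0 < e) (hc : 0 < c)
    (hdet : n * e - c = 3) (hdvd : c ∣ b ^ 2 + e) (he3 : e % 3 = 2 ∨ n % 3 = 0) :
    DiagRep 1 2 6 n := by
  obtain ⟨a, hac, hA, hdetA⟩ :=
    exists_tridiagonal_posDef (n := n) (s := 1) he hc (by linear_combination hdet) hdvd
  rcases he3 with he3 | hn3
  · refine diagRep_one_two_six_of_minor hA hdetA (i := 1) (j := 0) ?_ 2
    simpa [hac] using he3
  · refine diagRep_one_two_six_of_minor hA hdetA (i := 1) (j := 2) ?_ 2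
    simp [Int.sub_emod, Int.mul_emod, hn3]

/-! ### Primes in arithmetic progressions and reciprocity -/

lemma exists_prime_eq_add_mul {q r : ℤ} (hq : 0 < q) (h : IsCoprime r q) :
    ∃ p k : ℕ, p.Prime ∧ (p : ℤ) = r + q * k := by
  lift q to ℕ using hq.le
  obtain ⟨p, hgt, hp, hmod⟩ :=
    Nat.forall_exists_prime_gt_and_zmodEq r.natAbs (by lia : q ≠ 0) h
  obtain ⟨k, hk⟩ := hmod.symm.dvd
  have hk0 : 0 ≤ k := by
    have : 0 < q * k := by lia
    exact (pos_of_mul_pos_right this q.cast_nonneg).le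
  lift k to ℕ using hk0
  exact ⟨p, k, hp, by linear_combination hk⟩

lemma exists_prime_mul_eq_mul_sub {N m d t q r : ℤ} (hN : 0 < N) (hm : 0 ≤ m) (hd : 0 ≤ d)
    (hq : 0 < q) (hr : d * r = N * m - t) (hrq : IsCoprime r q) (hrt : IsCoprime r t) :
    ∃ p m' : ℕ, p.Prime ∧ (p : ℤ) % q = r % q ∧ (m' : ℤ) % q = m % q ∧ d * p = N * m' - t := by
  have hrN : IsCoprime r N := by
    obtain ⟨u, v, huv⟩ := hrt
    exact ⟨u - v * d, v * m, by linear_combination huv - v * hr⟩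
  obtain ⟨p, k, hp, hpk⟩ := exists_prime_eq_add_mul (mul_pos hq hN) (hrq.mul_right hrN)
  have hm' : 0 ≤ m + q * (d * k) := by positivity
  refine ⟨p, (m + q * (d * k)).toNat, hp, ?_, ?_, ?_⟩
  · rw [hpk, mul_assoc, Int.add_mul_emod_self_left]
  · rw [Int.toNat_of_nonneg hm', Int.add_mul_emod_self_left]
  · rw [Int.toNat_of_nonneg hm']
    linear_combination d * hpk + hr

lemma jacobiSym_neg_one_of_mod_four_eq_one {n : ℕ} (h : n % 4 = 1) : J(-1 | n) = 1 := by
  rw [jacobiSym.at_neg_one (Nat.odd_iff.2 (by lia)), ZMod.χ₄_nat_one_mod_four h]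

lemma jacobiSym_neg_one_of_mod_four_eq_three {n : ℕ} (h : n % 4 = 3) : J(-1 | n) = -1 := by
  rw [jacobiSym.at_neg_one (Nat.odd_iff.2 (by lia)), ZMod.χ₄_nat_three_mod_four h]

lemma jacobiSym_neg_three_of_mod_six_eq_one {n : ℕ} (h : n % 6 = 1) : J(-3 | n) = 1 := by
  rw [jacobiSym.mod_right _ (Nat.odd_iff.2 (by lia))]
  obtain h | h : n % 12 = 1 ∨ n % 12 = 7 := by lia
  all_goals norm_num [h]

lemma jacobiSym_neg_three_of_mod_six_eq_five {n : ℕ} (h : n % 6 = 5) : J(-3 | n) = -1 := by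
  rw [jacobiSym.mod_right _ (Nat.odd_iff.2 (by lia))]
  obtain h | h : n % 12 = 5 ∨ n % 12 = 11 := by lia
  all_goals norm_num [h]

lemma jacobiSym_two_of_mod_eight_eq_one {n : ℕ} (h : n % 8 = 1) : J(2 | n) = 1 := by
  rw [jacobiSym.mod_right _ (Nat.odd_iff.2 (by lia))]
  norm_num [h]

lemma jacobiSym_two_of_mod_eight_eq_three {n : ℕ} (h : n % 8 = 3) : J(2 | n) = -1 := by
  rw [jacobiSym.mod_right _ (Nat.odd_iff.2 (by lia))]
  norm_num [h]

lemma jacobiSym_neg_two_of_mod_eight_eq_three {n : ℕ} (h : n % 8 = 3) : J(-2 | n) = 1 := by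
  rw [jacobiSym.mod_right _ (Nat.odd_iff.2 (by lia))]
  norm_num [h]

lemma jacobiSym_neg_six_of_mod_twentyfour_eq_five {n : ℕ} (h : n % 24 = 5) : J(-6 | n) = 1 := by
  rw [jacobiSym.mod_right _ (Nat.odd_iff.2 (by lia))]
  norm_num [h]

lemma exists_dvd_sq_add_of_jacobiSym_eq_one {e : ℤ} {p : ℕ} (hp : p.Prime) (h : J(-e | p) = 1) :
    ∃ b : ℤ, (p : ℤ) ∣ b ^ 2 + e := by
  have := Fact.mk hp
  obtain ⟨x, hx⟩ := ZMod.isSquare_of_jacobiSym_eq_one h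
  obtain ⟨b, rfl⟩ := ZMod.intCast_surjective x
  refine ⟨b, (ZMod.intCast_zmod_eq_zero_iff_dvd _ p).1 ?_⟩
  push_cast at hx ⊢
  linear_combination -hx

lemma exists_mul_dvd_sq_add {R : Type*} [CommRing R] {p q e x y : R} (hpq : IsCoprime p q)
    (hx : p ∣ x ^ 2 + e) (hy : q ∣ y ^ 2 + e) : ∃ b, p * q ∣ b ^ 2 + e := by
  obtain ⟨u, v, huv⟩ := hpq
  have hsq (z w : R) : z - w ∣ z ^ 2 + e - (w ^ 2 + e) := ⟨z + w, by ring⟩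
  refine ⟨u * p * y + v * q * x, IsCoprime.mul_dvd ⟨u, v, huv⟩ ?_ ?_⟩
  · refine (dvd_iff_dvd_of_dvd_sub (dvd_trans ?_ (hsq _ x))).2 hx
    exact ⟨u * (y - x), by linear_combination x * huv⟩
  · refine (dvd_iff_dvd_of_dvd_sub (dvd_trans ?_ (hsq _ y))).2 hy
    exact ⟨v * (x - y), by linear_combination y * huv⟩

/-- By reciprocity `J(m | p) = J(p | m)`, which is `J(-t | m) * J(d | m)`. -/
lemma exists_prime_dvd_sq_add_mul {g d t : ℤ} {m p : ℕ} (hp : p.Prime) (hp2 : p % 2 = 1)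
    (hm2 : m % 2 = 1) (h4 : p % 4 = 1 ∨ m % 4 = 1) (hdvd : (m : ℤ) ∣ d * p + t)
    (hJ : J(-g | p) * J(-t | m) * J(d | m) = 1) : ∃ b : ℤ, (p : ℤ) ∣ b ^ 2 + g * m := by
  refine exists_dvd_sq_add_of_jacobiSym_eq_one hp ?_
  have hrec : J((m : ℤ) | p) = J((p : ℤ) | m) := by
    rcases h4 with h | h
    · exact jacobiSym.quadratic_reciprocity_one_mod_four' (Nat.odd_iff.2 hm2) h
    · exact jacobiSym.quadratic_reciprocity_one_mod_four h (Nat.odd_iff.2 hp2)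
  have hdp : J(d | m) * J((p : ℤ) | m) = J(-t | m) := by
    rw [← jacobiSym.mul_left]
    exact jacobiSym.mod_left' (Int.modEq_iff_dvd.2 (by rwa [dvd_sub_comm, sub_neg_eq_add]))
  have hd : J(d | m) * J(d | m) = 1 :=
    Int.isUnit_mul_self (IsUnit.of_mul_eq_one _ ((mul_comm _ _).trans hJ))
  rw [← neg_mul, jacobiSym.mul_left, hrec]
  linear_combination hJ + J(-g | p) * J(d | m) * hdp - J(-g | p) * J((p : ℤ) | m) * hd

/-! ### Integers represented by the ternary forms -/

lemma isCoprime_two_of_emod_eq_one {r : ℤ} (h : r % 2 = 1) : IsCoprime r 2 :=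
  ⟨1, -(r / 2), by lia⟩

lemma isCoprime_three_of_emod_ne_zero {r : ℤ} (h : r % 3 ≠ 0) : IsCoprime r 3 :=
  (Int.prime_three.coprime_iff_not_dvd.2 (by lia)).symm

lemma isCoprime_twentyfour {r : ℤ} (h2 : r % 2 = 1) (h3 : r % 3 ≠ 0) : IsCoprime r 24 := by
  have h8 : IsCoprime r (2 ^ 3) := (isCoprime_two_of_emod_eq_one h2).pow_right
  exact h8.mul_right (isCoprime_three_of_emod_ne_zero h3)

lemma diagRep_one_one_three_of_prime {n d s t : ℤ} {m p : ℕ} (hp : p.Prime) (hp4 : p % 4 = 1)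
    (hm : m % 6 = 1) (hrel : s ^ 2 * p = 4 * n * m - 3) (hdvd : (m : ℤ) ∣ d * p + t)
    (hJ : J(-t | m) * J(d | m) = 1) : DiagRep 1 1 3 n := by
  obtain ⟨b, hb⟩ := exists_prime_dvd_sq_add_mul (g := 1) hp (by lia) (by lia) (.inl hp4) hdvd
    (by rwa [jacobiSym_neg_one_of_mod_four_eq_one hp4, one_mul])
  refine diagRep_one_one_three_of_dvd (e := 4 * m) (c := p) (s := s) (b := 2 * b) (by lia)
    (mod_cast hp.pos) (by linear_combination -hrel) ?_ (by lia)
  exact (hb.mul_left 4).trans (dvd_of_eq (by ring))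

lemma diagRep_one_one_three_of_emod_three {n : ℤ} (h0 : 0 < n) (h3 : n % 3 ≠ 0) :
    DiagRep 1 1 3 n := by
  obtain ⟨p, m, hp, hpr, hm, hrel⟩ := exists_prime_mul_eq_mul_sub (N := 4 * n) (m := 1) (d := 1)
    (t := 3) (q := 24) (r := 4 * n - 3) (by lia) (by lia) (by lia) (by lia) (by ring)
    (isCoprime_twentyfour (by lia) (by lia)) (isCoprime_three_of_emod_ne_zero (by lia))
  refine diagRep_one_one_three_of_prime (m := m) (s := 1) (d := 1) (t := 3) hp (by lia) (by lia)
    (by linear_combination hrel) ⟨4 * n, by linear_combination hrel⟩ ?_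
  rw [jacobiSym_neg_three_of_mod_six_eq_one (by lia), jacobiSym.one_left, one_mul]

lemma diagRep_one_one_three_of_emod_nine {n : ℤ} (h0 : 0 < n) (h9 : n % 9 = 3) :
    DiagRep 1 1 3 n := by
  obtain ⟨k, rfl⟩ : ∃ k, n = 3 * k := ⟨n / 3, by lia⟩
  obtain ⟨m₀, r, hm₀, hr, hr3⟩ : ∃ m₀ r : ℤ,
      (m₀ = 1 ∨ m₀ = 7) ∧ 3 * r = 4 * k * m₀ - 1 ∧ r % 3 ≠ 0 := by
    by_cases h : (4 * k - 1) / 3 % 3 = 0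
    · exact ⟨7, (28 * k - 1) / 3, by lia⟩
    · exact ⟨1, (4 * k - 1) / 3, by lia⟩
  obtain ⟨p, m, hp, hpr, hm, hrel⟩ := exists_prime_mul_eq_mul_sub (q := 24) (by lia) (by lia)
    (by lia) (by lia) hr (isCoprime_twentyfour (by lia) hr3) isCoprime_one_right
  have hm6 : m % 6 = 1 := by lia
  refine diagRep_one_one_three_of_prime (m := m) (s := 3) (d := -3) (t := -1) hp (by lia) hm6
    (by linear_combination 3 * hrel) ⟨-(4 * k), by linear_combination -hrel⟩ ?_
  rw [jacobiSym_neg_three_of_mod_six_eq_one hm6, neg_neg, jacobiSym.one_left, one_mul]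

lemma diagRep_one_one_three {n : ℤ} (h0 : 0 ≤ n) (h9 : n % 9 ≠ 0) (h6 : n % 9 ≠ 6) :
    DiagRep 1 1 3 n := by
  by_cases h3 : n % 3 = 0
  · exact diagRep_one_one_three_of_emod_nine (by lia) (by lia)
  · exact diagRep_one_one_three_of_emod_three (by lia) h3

section OneTwoSix

variable {n : ℤ}

lemma diagRep_one_two_six_of_prime {d g t γ b₀ : ℤ} {m p : ℕ} (hp : p.Prime) (hp2 : p % 2 = 1)
    (hm2 : m % 2 = 1) (h4 : p % 4 = 1 ∨ m % 4 = 1) (hg : 0 < g) (hγ : 0 < γ)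
    (hpγ : IsCoprime γ p) (hb₀ : γ ∣ b₀ ^ 2 + g * m) (hrel : γ * p = n * (g * m) - 3)
    (hdvd : (m : ℤ) ∣ d * p + t) (hJ : J(-g | p) * J(-t | m) * J(d | m) = 1)
    (h3 : g * m % 3 = 2 ∨ n % 3 = 0) : DiagRep 1 2 6 n := by
  obtain ⟨b₁, hb₁⟩ := exists_prime_dvd_sq_add_mul hp hp2 hm2 h4 hdvd hJ
  obtain ⟨b, hb⟩ := exists_mul_dvd_sq_add hpγ hb₀ hb₁
  have hp0 : 0 < (p : ℤ) := mod_cast hp.pos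
  exact diagRep_one_two_six_of_dvd (by have : 0 < (m : ℤ) := (by lia); positivity)
    (by positivity) (by linear_combination -hrel) hb h3

lemma diagRep_one_two_six_of_emod_four_eq_two (h0 : 0 < n) (h4 : n % 4 = 2) (h3 : n % 3 ≠ 0) :
    DiagRep 1 2 6 n := by
  obtain ⟨p, m, hp, hpr, hm, hrel⟩ := exists_prime_mul_eq_mul_sub (N := n) (m := 5) (d := 1)
    (t := 3) (q := 24) (r := 5 * n - 3) h0 (by lia) (by lia) (by lia) (by ring)
    (isCoprime_twentyfour (by lia) (by lia)) (isCoprime_three_of_emod_ne_zero (by lia))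
  refine diagRep_one_two_six_of_prime (m := m) (d := 1) (g := 1) (t := 3) (γ := 1) (b₀ := 0) hp
    (by lia) (by lia) (.inr (by lia)) one_pos one_pos isCoprime_one_left (one_dvd _)
    (by linear_combination hrel) ⟨n, by linear_combination hrel⟩ ?_ (.inl (by lia))
  rw [jacobiSym_neg_one_of_mod_four_eq_three (by lia),
    jacobiSym_neg_three_of_mod_six_eq_five (by lia), jacobiSym.one_left]
  rfl

lemma diagRep_one_two_six_of_emod_four_eq_three (h0 : 0 < n) (h4 : n % 4 = 3)
    (h3 : n % 3 ≠ 0) : DiagRep 1 2 6 n := by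
  obtain ⟨p, m, hp, hpr, hm, hrel⟩ := exists_prime_mul_eq_mul_sub (N := 2 * n) (m := 1) (d := 1)
    (t := 3) (q := 24) (r := 2 * n - 3) (by lia) (by lia) (by lia) (by lia) (by ring)
    (isCoprime_twentyfour (by lia) (by lia)) (isCoprime_three_of_emod_ne_zero (by lia))
  refine diagRep_one_two_six_of_prime (m := m) (d := 1) (g := 2) (t := 3) (γ := 1) (b₀ := 0) hp
    (by lia) (by lia) (.inr (by lia)) two_pos one_pos isCoprime_one_left (one_dvd _)
    (by linear_combination hrel) ⟨2 * n, by linear_combination hrel⟩ ?_ (.inl (by lia))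
  rw [jacobiSym_neg_two_of_mod_eight_eq_three (by lia),
    jacobiSym_neg_three_of_mod_six_eq_one (by lia), jacobiSym.one_left]
  rfl

lemma diagRep_one_two_six_of_emod_eight_eq_one (h0 : 0 < n) (h8 : n % 8 = 1) (h3 : n % 3 ≠ 0) :
    DiagRep 1 2 6 n := by
  obtain ⟨r, hr⟩ : ∃ r : ℤ, 2 * r = n * 17 - 3 := ⟨(17 * n - 3) / 2, by lia⟩
  obtain ⟨p, m, hp, hpr, hm, hrel⟩ := exists_prime_mul_eq_mul_sub (q := 24) h0 (by lia) (by lia)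
    (by lia) hr (isCoprime_twentyfour (by lia) (by lia))
    (isCoprime_three_of_emod_ne_zero (by lia))
  refine diagRep_one_two_six_of_prime (m := m) (d := 2) (g := 1) (t := 3) (γ := 2) (b₀ := 1) hp
    (by lia) (by lia) (.inr (by lia)) one_pos two_pos
    (isCoprime_two_of_emod_eq_one (by lia)).symm (by lia) (by linear_combination hrel)
    ⟨n, by linear_combination hrel⟩ ?_ (.inl (by lia))
  rw [jacobiSym_neg_one_of_mod_four_eq_three (by lia),
    jacobiSym_neg_three_of_mod_six_eq_five (by lia), jacobiSym_two_of_mod_eight_eq_one (by lia)]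
  rfl

lemma diagRep_one_two_six_three_mul_of_emod_four_eq_two (h0 : 0 < n) (h4 : n % 4 = 2) :
    DiagRep 1 2 6 (3 * n) := by
  obtain ⟨p, m, hp, hpr, hm, hrel⟩ := exists_prime_mul_eq_mul_sub (N := 3 * n) (m := 3) (d := 1)
    (t := 1) (q := 24) (r := 9 * n - 1) (by lia) (by lia) (by lia) (by lia) (by ring)
    (isCoprime_twentyfour (by lia) (by lia)) isCoprime_one_right
  refine diagRep_one_two_six_of_prime (m := m) (d := 1) (g := 3) (t := 1) (γ := 3) (b₀ := 0) hp
    (by lia) (by lia) (.inl (by lia)) three_pos three_pos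
    (isCoprime_three_of_emod_ne_zero (by lia)).symm (by lia) (by linear_combination 3 * hrel)
    ⟨3 * n, by linear_combination hrel⟩ ?_ (.inr (by lia))
  rw [jacobiSym_neg_three_of_mod_six_eq_five (by lia),
    jacobiSym_neg_one_of_mod_four_eq_three (by lia), jacobiSym.one_left]
  rfl

lemma diagRep_one_two_six_three_mul_of_emod_four_eq_one (h0 : 0 < n) (h4 : n % 4 = 1) :
    DiagRep 1 2 6 (3 * n) := by
  obtain ⟨p, m, hp, hpr, hm, hrel⟩ := exists_prime_mul_eq_mul_sub (N := 6 * n) (m := 1) (d := 1)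
    (t := 1) (q := 24) (r := 6 * n - 1) (by lia) (by lia) (by lia) (by lia) (by ring)
    (isCoprime_twentyfour (by lia) (by lia)) isCoprime_one_right
  refine diagRep_one_two_six_of_prime (m := m) (d := 1) (g := 6) (t := 1) (γ := 3) (b₀ := 0) hp
    (by lia) (by lia) (.inr (by lia)) (by lia) three_pos
    (isCoprime_three_of_emod_ne_zero (by lia)).symm (by lia) (by linear_combination 3 * hrel)
    ⟨6 * n, by linear_combination hrel⟩ ?_ (.inr (by lia))
  rw [jacobiSym_neg_six_of_mod_twentyfour_eq_five (by lia),
    jacobiSym_neg_one_of_mod_four_eq_one (by lia), jacobiSym.one_left]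
  rfl

lemma diagRep_one_two_six_three_mul_of_emod_eight_eq_three (h0 : 0 < n) (h8 : n % 8 = 3) :
    DiagRep 1 2 6 (3 * n) := by
  obtain ⟨r, hr⟩ : ∃ r : ℤ, 2 * r = 3 * n * 3 - 1 := ⟨(9 * n - 1) / 2, by lia⟩
  obtain ⟨p, m, hp, hpr, hm, hrel⟩ := exists_prime_mul_eq_mul_sub (q := 24) (by lia) (by lia)
    (by lia) (by lia) hr (isCoprime_twentyfour (by lia) (by lia)) isCoprime_one_right
  have hp6 : IsCoprime (2 * 3 : ℤ) p :=
    ((isCoprime_two_of_emod_eq_one (by lia)).mul_right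
      (isCoprime_three_of_emod_ne_zero (by lia))).symm
  refine diagRep_one_two_six_of_prime (m := m) (d := 2) (g := 3) (t := 1) (b₀ := 3) hp
    (by lia) (by lia) (.inl (by lia)) three_pos (by lia) hp6 (by lia)
    (by linear_combination 3 * hrel) ⟨3 * n, by linear_combination hrel⟩ ?_ (.inr (by lia))
  rw [jacobiSym_neg_three_of_mod_six_eq_one (by lia),
    jacobiSym_neg_one_of_mod_four_eq_three (by lia),
    jacobiSym_two_of_mod_eight_eq_three (by lia)]
  rfl

lemma diagRep_one_two_six (h0 : 0 ≤ n) (h4 : n % 4 ≠ 0) (h8 : n % 8 ≠ 5) : DiagRep 1 2 6 n := by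
  by_cases h3 : n % 3 = 0
  · obtain ⟨k, rfl⟩ : ∃ k, n = 3 * k := ⟨n / 3, by lia⟩
    obtain h | h | h : k % 4 = 2 ∨ k % 4 = 1 ∨ k % 8 = 3 := by lia
    · exact diagRep_one_two_six_three_mul_of_emod_four_eq_two (by lia) h
    · exact diagRep_one_two_six_three_mul_of_emod_four_eq_one (by lia) h
    · exact diagRep_one_two_six_three_mul_of_emod_eight_eq_three (by lia) h
  · obtain h | h | h : n % 4 = 2 ∨ n % 4 = 3 ∨ n % 8 = 1 := by lia
    · exact diagRep_one_two_six_of_emod_four_eq_two (by lia) h h3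
    · exact diagRep_one_two_six_of_emod_four_eq_three (by lia) h h3
    · exact diagRep_one_two_six_of_emod_eight_eq_one (by lia) h h3

end OneTwoSix

/-! ### Universal quaternary forms -/

/-- `n` is an integral value of the quaternary form
`f^{a,b}_c = a * x ^ 2 + b * y ^ 2 + c * (z ^ 2 + z * w + w ^ 2)`. -/
def QuatRep (a b c n : ℤ) : Prop :=
  ∃ x y z w : ℤ, n = a * x ^ 2 + b * y ^ 2 + c * (z ^ 2 + z * w + w ^ 2)

lemma DiagRep.mul_left {a b c n : ℤ} (h : DiagRep a b c n) (d : ℤ) :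
    DiagRep (d * a) (d * b) (d * c) (d * n) := by
  obtain ⟨x, y, z, rfl⟩ := h
  exact ⟨x, y, z, by ring⟩

lemma DiagRep.sq_mul {a b c n : ℤ} (h : DiagRep a b c n) (d : ℤ) : DiagRep a b c (d ^ 2 * n) := by
  obtain ⟨x, y, z, rfl⟩ := h
  exact ⟨d * x, d * y, d * z, by ring⟩

/-- `u ^ 2 + 3 * v ^ 2` is the value of `z ^ 2 + z * w + w ^ 2` at `(u - v, 2 * v)`. -/
lemma DiagRep.quatRep {a b c n : ℤ} (y : ℤ) (h : DiagRep a c (3 * c) (n - b * y ^ 2)) :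
    QuatRep a b c n := by
  obtain ⟨x, u, v, huv⟩ := h
  exact ⟨x, y, u - v, 2 * v, by linear_combination huv⟩

lemma DiagRep.two_one_three {n : ℤ} (h : DiagRep 1 2 6 (2 * n)) : DiagRep 2 1 3 n := by
  obtain ⟨x, u, v, huv⟩ := h
  have hx : Even (x ^ 2) := ⟨n - u ^ 2 - 3 * v ^ 2, by linear_combination -huv⟩
  obtain ⟨k, rfl⟩ := even_iff_exists_two_mul.1 ((Int.even_pow' two_ne_zero).1 hx)
  exact ⟨k, u, v, mul_left_cancel₀ two_ne_zero (by linear_combination huv)⟩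

lemma DiagRep.one_three_nine {n : ℤ} (h : DiagRep 1 1 3 n) (h3 : n % 3 ≠ 2) :
    DiagRep 1 3 9 n := by
  obtain ⟨x, y, z, rfl⟩ := h
  have hxy : 3 ∣ x ^ 2 ∨ 3 ∣ y ^ 2 := by
    have := sq_emod_three x
    have := sq_emod_three y
    lia
  rcases hxy with h | h
  · obtain ⟨k, rfl⟩ := Int.prime_three.dvd_of_dvd_pow h
    exact ⟨y, z, k, by ring⟩
  · obtain ⟨k, rfl⟩ := Int.prime_three.dvd_of_dvd_pow h
    exact ⟨x, z, k, by ring⟩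

namespace QuatRep

variable {a b c n : ℤ}

lemma swap (h : QuatRep a b c n) : QuatRep b a c n := by
  obtain ⟨x, y, z, w, rfl⟩ := h
  exact ⟨y, x, z, w, by ring⟩

lemma sq_mul (h : QuatRep a b c n) (d : ℤ) : QuatRep a b c (d ^ 2 * n) := by
  obtain ⟨x, y, z, w, rfl⟩ := h
  exact ⟨d * x, d * y, d * z, d * w, by ring⟩

lemma of_not_sq_dvd {d : ℤ} (hd : 1 < d) (h : ∀ n, 0 ≤ n → ¬ d ^ 2 ∣ n → QuatRep a b c n)
    (hn : 0 ≤ n) : QuatRep a b c n := by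
  lift n to ℕ using hn
  induction n using Nat.strong_induction_on with
  | _ n ih =>
    by_cases hdn : d ^ 2 ∣ (n : ℤ)
    · obtain ⟨m, hm⟩ := hdn
      rcases n.eq_zero_or_pos with rfl | hn
      · exact ⟨0, 0, 0, 0, by simp⟩
      have hm0 : 0 < m := pos_of_mul_pos_right (hm ▸ mod_cast hn) (sq_nonneg d)
      have hmn : m < n := hm ▸ lt_mul_of_one_lt_left hm0 (one_lt_pow₀ hd two_ne_zero)
      lift m to ℕ using hm0.le
      rw [hm]
      exact (ih m (mod_cast hmn)).sq_mul d
    · exact h n n.cast_nonneg hdn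

end QuatRep

lemma diagRep_one_two_six_two_mul {n : ℤ} (h0 : 0 ≤ n)
    (h : n % 8 = 4 ∨ n % 4 ≠ 0 ∧ n % 16 ≠ 10) : DiagRep 1 2 6 (2 * n) := by
  rcases Int.even_or_odd' n with ⟨m, rfl | rfl⟩
  · rw [← mul_assoc]
    exact (diagRep_one_two_six (n := m) (by lia) (by lia) (by lia)).sq_mul 2
  · exact diagRep_one_two_six (by lia) (by lia) (by lia)

lemma quatRep_one_six_one_nine_mul_add_six {m : ℤ} (hm : 0 ≤ m) : QuatRep 1 6 1 (9 * m + 6) := by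
  have of_sub (y k : ℤ) (hk0 : 0 ≤ k) (hk9 : k % 9 ≠ 0) (hk6 : k % 9 ≠ 6)
      (h : 3 ^ 2 * k = 9 * m + 6 - 6 * y ^ 2) : QuatRep 1 6 1 (9 * m + 6) :=
    DiagRep.quatRep y (h ▸ (diagRep_one_one_three hk0 hk9 hk6).sq_mul 3)
  rcases eq_or_ne m 0 with rfl | hm0
  · exact ⟨0, 1, 0, 0, by simp⟩
  by_cases hm9 : m % 9 = 0 ∨ m % 9 = 6
  · exact of_sub 2 (m - 2) (by lia) (by lia) (by lia) (by ring)
  · exact of_sub 1 m hm (by lia) (by lia) (by ring)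

lemma quatRep_one_one {b n : ℤ} (hb : 1 ≤ b) (hb6 : b ≤ 6) (hn : 0 ≤ n) : QuatRep 1 b 1 n := by
  refine QuatRep.of_not_sq_dvd (d := 3) (by lia) (fun n hn h9 ↦ ?_) hn
  by_cases h6 : n % 9 = 6
  · obtain rfl | hb5 : b = 6 ∨ b ≤ 5 := by lia
    · convert quatRep_one_six_one_nine_mul_add_six (m := n / 9) (by lia) using 1
      lia
    · exact (diagRep_one_one_three (by lia) (by lia) (by lia)).quatRep 1
  · exact (diagRep_one_one_three (by lia) (by lia) (by lia)).quatRep 0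

lemma quatRep_two_one {b n : ℤ} (hb : 2 ≤ b) (hb10 : b ≤ 10) (hn : 0 ≤ n) : QuatRep 2 b 1 n := by
  refine QuatRep.of_not_sq_dvd (d := 2) (by lia) (fun n hn h4 ↦ ?_) hn
  have of_sub (y : ℤ) (h0 : 0 ≤ n - b * y ^ 2)
      (h : (n - b * y ^ 2) % 8 = 4 ∨ (n - b * y ^ 2) % 4 ≠ 0 ∧ (n - b * y ^ 2) % 16 ≠ 10) :
      QuatRep 2 b 1 n := (diagRep_one_two_six_two_mul h0 h).two_one_three.quatRep y
  by_cases h10 : n % 16 = 10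
  · obtain rfl | rfl | hb' : b = 2 ∨ b = 10 ∨ 3 ≤ b ∧ b ≤ 9 := by lia
    · exact of_sub 2 (by lia) (by lia)
    · obtain rfl | rfl | hn40 : n = 10 ∨ n = 26 ∨ 40 ≤ n := by lia
      · exact ⟨0, 1, 0, 0, by simp⟩
      · exact ⟨0, 1, 4, 0, by simp⟩
      · exact of_sub 2 (by lia) (by lia)
    · exact of_sub 1 (by lia) (by lia)
  · exact of_sub 0 (by lia) (by lia)

lemma quatRep_one_two {b n : ℤ} (hb : 1 ≤ b) (hb5 : b ≤ 5) (hn : 0 ≤ n) : QuatRep 1 b 2 n := by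
  refine QuatRep.of_not_sq_dvd (d := 2) (by lia) (fun n hn h4 ↦ ?_) hn
  have of_sub (y : ℤ) (h0 : 0 ≤ n - b * y ^ 2) (h4 : (n - b * y ^ 2) % 4 ≠ 0)
      (h8 : (n - b * y ^ 2) % 8 ≠ 5) : QuatRep 1 b 2 n :=
    (diagRep_one_two_six h0 h4 h8).quatRep y
  by_cases h5 : n % 8 = 5
  · obtain rfl | rfl | hb' : b = 1 ∨ b = 5 ∨ 2 ≤ b ∧ b ≤ 4 := by lia
    · exact of_sub 2 (by lia) (by lia) (by lia)
    · obtain rfl | rfl | hn20 : n = 5 ∨ n = 13 ∨ 20 ≤ n := by lia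
      · exact ⟨0, 1, 0, 0, by simp⟩
      · exact ⟨0, 1, 2, 0, by simp⟩
      · exact of_sub 2 (by lia) (by lia) (by lia)
    · exact of_sub 1 (by lia) (by lia) (by lia)
  · exact of_sub 0 (by lia) (by lia) (by lia)

lemma quatRep_one_two_three {n : ℤ} (hn : 0 ≤ n) : QuatRep 1 2 3 n := by
  have of_sub (y : ℤ) (h0 : 0 ≤ n - 2 * y ^ 2) (h3 : (n - 2 * y ^ 2) % 3 ≠ 2)
      (h9 : (n - 2 * y ^ 2) % 9 ≠ 0) (h6 : (n - 2 * y ^ 2) % 9 ≠ 6) : QuatRep 1 2 3 n :=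
    ((diagRep_one_one_three h0 h9 h6).one_three_nine h3).quatRep y
  by_cases hsmall : n = 0 ∨ n = 2 ∨ n = 8 ∨ n = 17 ∨ n = 26
  · rcases hsmall with rfl | rfl | rfl | rfl | rfl
    · exact ⟨0, 0, 0, 0, by simp⟩
    · exact ⟨0, 1, 0, 0, by simp⟩
    · exact ⟨0, 2, 0, 0, by simp⟩
    · exact ⟨3, 2, 0, 0, by simp⟩
    · exact ⟨3, 2, 1, 1, by simp⟩
  obtain h | h | h | h :
      n % 3 = 1 ∨ n % 9 = 8 ∨ n % 9 = 2 ∨ n % 3 ≠ 1 ∧ n % 9 ≠ 8 ∧ n % 9 ≠ 2 := by lia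
  · exact of_sub 0 (by lia) (by lia) (by lia) (by lia)
  · exact of_sub 4 (by lia) (by lia) (by lia) (by lia)
  · exact of_sub 2 (by lia) (by lia) (by lia) (by lia)
  · exact of_sub 1 (by lia) (by lia) (by lia) (by lia)

lemma quatRep_one_two_four_of_eq {m n : ℤ} (x : ℤ) (hm : DiagRep 1 2 6 m)
    (hn : n = x ^ 2 + 2 * m) : QuatRep 1 2 4 n := by
  have h := hm.mul_left 2
  rw [show 2 * m = n - 1 * x ^ 2 by linear_combination -hn] at h
  exact (h.quatRep x).swap

lemma quatRep_one_two_four_eight_mul_add_one {j : ℤ} (hj : 0 ≤ j) :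
    QuatRep 1 2 4 (8 * j + 1) := by
  have of_sub (x k : ℤ) (hk0 : 0 ≤ k) (hk4 : k % 4 ≠ 0) (hk8 : k % 8 ≠ 5)
      (h : 8 * j + 1 = x ^ 2 + 2 * (2 ^ 2 * k)) : QuatRep 1 2 4 (8 * j + 1) :=
    quatRep_one_two_four_of_eq x ((diagRep_one_two_six hk0 hk4 hk8).sq_mul 2) h
  rcases eq_or_ne j 0 with rfl | hj0
  · exact ⟨1, 0, 0, 0, by simp⟩
  by_cases hj4 : j % 4 = 0
  · exact of_sub 3 (j - 1) (by lia) (by lia) (by lia) (by ring)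
  by_cases hj8 : j % 8 = 5
  · exact of_sub 5 (j - 3) (by lia) (by lia) (by lia) (by ring)
  · exact of_sub 1 j hj hj4 hj8 (by ring)

lemma quatRep_one_two_four {n : ℤ} (hn : 0 ≤ n) : QuatRep 1 2 4 n := by
  refine QuatRep.of_not_sq_dvd (d := 2) (by lia) (fun n hn hdvd ↦ ?_) hn
  have of_sub (x k : ℤ) (hk0 : 0 ≤ k) (hk4 : k % 4 ≠ 0) (hk8 : k % 8 ≠ 5)
      (h : n = x ^ 2 + 2 * k) : QuatRep 1 2 4 n :=
    quatRep_one_two_four_of_eq x (diagRep_one_two_six hk0 hk4 hk8) h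
  rcases Int.even_or_odd' n with ⟨k, rfl | rfl⟩
  · by_cases h5 : k % 8 = 5
    · exact of_sub 2 (k - 2) (by lia) (by lia) (by lia) (by ring)
    · exact of_sub 0 k (by lia) (by lia) (by lia) (by ring)
  · obtain h5 | h4 | ⟨h5, h4⟩ : k % 8 = 5 ∨ k % 4 = 0 ∨ k % 8 ≠ 5 ∧ k % 4 ≠ 0 := by lia
    · exact of_sub 3 (k - 4) (by lia) (by lia) (by lia) (by ring)
    · convert quatRep_one_two_four_eight_mul_add_one (j := k / 4) (by lia) using 1
      lia
    · exact of_sub 1 k (by lia) h4 h5 (by ring)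

/-! ### Truants -/

lemma sq_eq_of_sq_le_ten {x : ℤ} (h : x ^ 2 ≤ 10) :
    x ^ 2 = 0 ∨ x ^ 2 = 1 ∨ x ^ 2 = 4 ∨ x ^ 2 = 9 := by
  obtain ⟨h1, h2⟩ : -4 < x ∧ x < 4 := abs_lt_of_sq_lt_sq' (by lia) (by lia)
  interval_cases x <;> simp

namespace QuatRep

variable {a b c : ℤ}

lemma exists_of_le_ten {n : ℤ} (ha : 0 < a) (hb : 0 < b) (hc : 0 < c) (hn : n ≤ 10)
    (h : QuatRep a b c n) : ∃ X Y Q : ℤ, (X = 0 ∨ X = 1 ∨ X = 4 ∨ X = 9) ∧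
      (Y = 0 ∨ Y = 1 ∨ Y = 4 ∨ Y = 9) ∧ (Q = 0 ∨ Q = 1 ∨ Q = 3 ∨ Q = 4 ∨ Q = 7 ∨ Q = 9) ∧
      n = a * X + b * Y + c * Q := by
  obtain ⟨x, y, z, w, rfl⟩ := h
  obtain ⟨u, v, huv⟩ := exists_sq_add_three_mul_sq z w
  rw [huv] at hn ⊢
  have hx : x ^ 2 ≤ a * x ^ 2 := le_mul_of_one_le_left (sq_nonneg x) ha
  have hy : y ^ 2 ≤ b * y ^ 2 := le_mul_of_one_le_left (sq_nonneg y) hb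
  have hq : u ^ 2 + 3 * v ^ 2 ≤ c * (u ^ 2 + 3 * v ^ 2) :=
    le_mul_of_one_le_left (by positivity) hc
  have := sq_nonneg x
  have := sq_nonneg y
  have := sq_nonneg u
  have := sq_nonneg v
  refine ⟨x ^ 2, y ^ 2, u ^ 2 + 3 * v ^ 2, sq_eq_of_sq_le_ten (by lia),
    sq_eq_of_sq_le_ten (by lia), ?_, rfl⟩
  have := sq_eq_of_sq_le_ten (x := u) (by lia)
  have := sq_eq_of_sq_le_ten (x := v) (by lia)
  lia

lemma eq_one_of_one (ha : 0 < a) (hb : 0 < b) (hc : 0 < c) (h : QuatRep a b c 1) :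
    a = 1 ∨ b = 1 ∨ c = 1 := by
  obtain ⟨X, Y, Q, hX, hY, hQ, h⟩ := h.exists_of_le_ten ha hb hc (by lia)
  grind (splits := 12)

lemma le_two_of_two (ha : 0 < a) (hb : 0 < b) (h : QuatRep a b 1 2) : a ≤ 2 ∨ b ≤ 2 := by
  obtain ⟨X, Y, Q, hX, hY, hQ, h⟩ := h.exists_of_le_ten ha hb one_pos (by lia)
  grind (splits := 12)

lemma le_six_of_six (hb : 0 < b) (h : QuatRep 1 b 1 6) : b ≤ 6 := by
  obtain ⟨X, Y, Q, hX, hY, hQ, h⟩ := h.exists_of_le_ten one_pos hb one_pos (by lia)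
  grind (splits := 12)

lemma le_ten_of_ten (hb : 0 < b) (h : QuatRep 2 b 1 10) : b ≤ 10 := by
  obtain ⟨X, Y, Q, hX, hY, hQ, h⟩ := h.exists_of_le_ten two_pos hb one_pos le_rfl
  grind (splits := 12)

lemma le_five_of_five (hb : 0 < b) (h : QuatRep 1 b 2 5) : b ≤ 5 := by
  obtain ⟨X, Y, Q, hX, hY, hQ, h⟩ := h.exists_of_le_ten one_pos hb two_pos (by lia)
  grind (splits := 12)

lemma le_two_or_le_two_of_two (hb : 0 < b) (hc : 0 < c) (h : QuatRep 1 b c 2) :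
    b ≤ 2 ∨ c ≤ 2 := by
  obtain ⟨X, Y, Q, hX, hY, hQ, h⟩ := h.exists_of_le_ten one_pos hb hc (by lia)
  grind (splits := 12)

lemma le_three_of_three (hc : 0 < c) (h : QuatRep 1 1 c 3) : c ≤ 3 := by
  obtain ⟨X, Y, Q, hX, hY, hQ, h⟩ := h.exists_of_le_ten one_pos one_pos hc (by lia)
  grind (splits := 12)

lemma not_one_one_three_six : ¬ QuatRep 1 1 3 6 := by
  intro h
  obtain ⟨X, Y, Q, hX, hY, hQ, h⟩ := h.exists_of_le_ten one_pos one_pos three_pos (by lia)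
  grind (splits := 12)

lemma one_two_le_five_of_five (hc : 0 < c) (h : QuatRep 1 2 c 5) : c ≤ 5 := by
  obtain ⟨X, Y, Q, hX, hY, hQ, h⟩ := h.exists_of_le_ten one_pos two_pos hc (by lia)
  grind (splits := 12)

lemma not_one_two_five_ten : ¬ QuatRep 1 2 5 10 := by
  intro h
  obtain ⟨X, Y, Q, hX, hY, hQ, h⟩ := h.exists_of_le_ten one_pos two_pos (by lia) le_rfl
  grind (splits := 12)

end QuatRep

lemma coefficients_of_universal {a b c : ℤ} (ha : 0 < a) (hc : 0 < c) (hab : a ≤ b)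
    (h : ∀ n : ℕ, QuatRep a b c n) :
    (a = 1 ∧ c = 1 ∧ b ≤ 6) ∨ (a = 2 ∧ c = 1 ∧ b ≤ 10) ∨ (a = 1 ∧ c = 2 ∧ b ≤ 5) ∨
      (a = 1 ∧ b = 2 ∧ c = 3) ∨ (a = 1 ∧ b = 2 ∧ c = 4) := by
  have hb : 0 < b := ha.trans_le hab
  obtain rfl | ⟨rfl, hc1⟩ : c = 1 ∨ a = 1 ∧ 2 ≤ c := by
    have := (h 1).eq_one_of_one ha hb hc
    lia
  · obtain rfl | rfl : a = 1 ∨ a = 2 := by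
      have := (h 2).le_two_of_two ha hb
      lia
    · exact .inl ⟨rfl, rfl, (h 6).le_six_of_six hb⟩
    · exact .inr (.inl ⟨rfl, rfl, (h 10).le_ten_of_ten hb⟩)
  obtain rfl | rfl | ⟨rfl, hc2⟩ : c = 2 ∨ b = 1 ∨ b = 2 ∧ 3 ≤ c := by
    have := (h 2).le_two_or_le_two_of_two hb hc
    lia
  · exact .inr (.inr (.inl ⟨rfl, rfl, (h 5).le_five_of_five hb⟩))
  · have hc3 : c ≠ 3 := fun hc3 ↦ QuatRep.not_one_one_three_six (hc3 ▸ h 6)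
    have := (h 3).le_three_of_three hc
    have : c = 2 := by lia
    exact .inr (.inr (.inl ⟨rfl, this, by lia⟩))
  · have hc5 : c ≠ 5 := fun hc5 ↦ QuatRep.not_one_two_five_ten (hc5 ▸ h 10)
    have := (h 5).one_two_le_five_of_five hc
    lia

theorem stmt_0 (a b c : ℕ) (ha : 0 < a) (hb : 0 < b) (hc : 0 < c) (hab : a ≤ b) :
    (∀ n : ℕ, ∃ x y z w : ℤ,
      (n : ℤ) = a * x ^ 2 + b * y ^ 2 + c * (z ^ 2 + z * w + w ^ 2)) ↔
    ((a = 1 ∧ c = 1 ∧ b ∈ ({1, 2, 3, 4, 5, 6} : Set ℕ)) ∨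
     (a = 2 ∧ c = 1 ∧ b ∈ ({2, 3, 4, 5, 6, 7, 8, 9, 10} : Set ℕ)) ∨
     (a = 1 ∧ c = 2 ∧ b ∈ ({1, 2, 3, 4, 5} : Set ℕ)) ∨
     (a = 1 ∧ b = 2 ∧ c = 3) ∨
     (a = 1 ∧ b = 2 ∧ c = 4)) := by
  simp only [Set.mem_insert_iff, Set.mem_singleton_iff]
  constructor
  · intro h
    have := coefficients_of_universal (a := a) (b := b) (c := c) (mod_cast ha) (mod_cast hc)
      (mod_cast hab) h
    omega
  · rintro (⟨rfl, rfl, hb'⟩ | ⟨rfl, rfl, hb'⟩ | ⟨rfl, rfl, hb'⟩ | ⟨rfl, rfl, rfl⟩ |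
      ⟨rfl, rfl, rfl⟩) n
    · exact quatRep_one_one (by lia) (by lia) n.cast_nonneg
    · exact quatRep_two_one (by lia) (by lia) n.cast_nonneg
    · exact quatRep_one_two (by lia) (by lia) n.cast_nonneg
    · exact quatRep_one_two_three n.cast_nonneg
    · exact quatRep_one_two_four n.cast_nonneg
end

section
/- Let a, b, c be positive integers with a ≤ b. If the quadratic form f^{a,b}_c(x,y,z,w) = a·x² + b·y² + c·(z² + z·w + w²) represents each of the integers 1, 2, 3, 5, 6, 10 (with x, y, z, w ∈ ℤ), then it represents every nonnegative integer. -/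
/-!
The small values force `(a, b, c)` to be `(1, b, 1)` with `b ≤ 6`, `(1, b, 2)` with `b ≤ 5`,
`(2, b, 1)` with `b ≤ 10`, `(1, 2, 3)` or `(1, 2, 4)`.

All of these but `(1, 3, 1)` contain a ternary form whose values are governed by the three-squares
theorem: for instance `2 x² + z² + z w + w²` represents `n` once `6 n` is a sum of three squares.
The set of values is closed under multiplication by `4`, so only `n` not divisible by `4` matter;
for these the ternary form misses a few residue classes, and subtracting a value of the remaining
variable leads out of them. The three-squares theorem is proved following Dirichlet: primes in
arithmetic progressions and quadratic reciprocity give `d > 0` such that `-d` is a square modulo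
`d n - 1`. This yields a positive definite ternary form of determinant `1` that represents `n`, and
Hermite reduction shows that such a form is equivalent to a sum of three squares.

The form `(1, 3, 1)` takes the same values as the sum of two Eisenstein norms. Such sums are
multiplicative, and every prime is one: if `p ∣ u² + 3 v² + 1` then `p` is represented by a
Hermitian form of determinant `1` over the Eisenstein integers, which reduces to a sum of two norms.
-/

open Matrix NumberTheorySymbols

/-! ### Reduction of Hermitian matrices of determinant one -/

section Gram

variable {n R : Type*} [Fintype n] [CommRing R] [StarRing R]

/-- `M` is the matrix of inner products of the columns of some square matrix over `R`. Over `ℤ`,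
where the involution is trivial, the form with matrix `M` is then a sum of squares of linear
forms. -/
def IsGram (M : Matrix n n R) : Prop := ∃ P : Matrix n n R, M = Pᴴ * P

theorem IsGram.of_congr [DecidableEq n] {M Q : Matrix n n R} (hQ : IsUnit Q.det)
    (h : IsGram (Qᴴ * M * Q)) : IsGram M := by
  obtain ⟨P, hP⟩ := h
  have hQ' : IsUnit Qᴴ.det := by rw [det_conjTranspose]; exact hQ.star
  refine ⟨P * Q⁻¹, ?_⟩
  calc M = Qᴴ⁻¹ * (Qᴴ * M * Q) * Q⁻¹ := by
        rw [Matrix.mul_assoc Qᴴ, nonsing_inv_mul_cancel_left _ _ hQ',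
          mul_nonsing_inv_cancel_right _ _ hQ]
    _ = (P * Q⁻¹)ᴴ * (P * Q⁻¹) := by
        rw [hP, conjTranspose_mul, conjTranspose_nonsing_inv]
        simp only [Matrix.mul_assoc]

end Gram

/-- A ring with involution in which Hermite reduction of binary Hermitian forms works: the
self-adjoint elements are integers, and division by a positive integer `m` leaves a remainder of
norm at most `m² / 2`. -/
structure HasSmallRemainders (R : Type*) [CommRing R] [StarRing R] : Prop where
  exists_intCast_eq {x : R} : IsSelfAdjoint x → ∃ k : ℤ, x = k
  exists_remainder (x : R) {m : ℤ} : 0 < m →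
    ∃ (k : R) (r : ℤ), star (x + m * k) * (x + m * k) = r ∧ 0 ≤ r ∧ 2 * r ≤ m ^ 2

theorem HasSmallRemainders.isGram_of_det_eq_one {R : Type*} [CommRing R] [StarRing R] [CharZero R]
    (hR : HasSmallRemainders R) {a c : ℤ} {x : R} (ha : 0 < a) (hdet : a * c - star x * x = 1) :
    IsGram !![(a : R), x; star x, c] := by
  induction hN : a.toNat using Nat.strong_induction_on generalizing a c x with
  | _ N ih =>
  obtain rfl | ha1 : a = 1 ∨ 2 ≤ a := by omega
  · have hc : (c : R) = star x * x + 1 := by linear_combination hdet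
    refine ⟨!![1, x; 0, 1], ?_⟩
    ext i j
    fin_cases i <;> fin_cases j <;> simp [mul_apply, Fin.sum_univ_two, hc]
  obtain ⟨k, r, hr, hr0, hrm⟩ := hR.exists_remainder x ha
  obtain ⟨c', hc'⟩ := hR.exists_intCast_eq
    (x := a * (star k * k) + (star k * x + star x * k) + c) (by
      simp [isSelfAdjoint_iff, mul_comm, add_comm])
  have hac : a * c' = r + 1 := by
    have : (a * c' : R) = r + 1 := by
      rw [← hc', ← hr]
      simp only [star_add, star_mul, star_intCast]
      linear_combination hdet
    exact_mod_cast this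
  have hc'_pos : 0 < c' := pos_of_mul_pos_right (by omega : 0 < a * c') ha.le
  have hc'_lt : c' < a := by nlinarith
  have hreduced : IsGram !![(c' : R), star (x + a * k); star (star (x + a * k)), a] :=
    ih c'.toNat (by omega) hc'_pos (by
      rw [star_star, mul_comm (x + a * k), hr, mul_comm]
      exact_mod_cast (by omega : a * c' - r = 1)) rfl
  refine IsGram.of_congr (Q := !![k, 1; 1, 0]) (by simp [det_fin_two]) ?_
  convert hreduced using 1
  ext i j
  fin_cases i <;> fin_cases j <;>
    simp [mul_apply, Fin.sum_univ_two, ← hc'] <;> ring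

theorem exists_four_mul_sq_add_mul_le {m : ℤ} (hm : 0 < m) (x : ℤ) :
    ∃ k : ℤ, 4 * (x + m * k) ^ 2 ≤ m ^ 2 := by
  refine ⟨-((2 * x + m) / (2 * m)), ?_⟩
  have hdiv := Int.emod_add_mul_ediv (2 * x + m) (2 * m)
  have hnonneg := Int.emod_nonneg (2 * x + m) (b := 2 * m) (by omega)
  have hlt := Int.emod_lt_of_pos (2 * x + m) (b := 2 * m) (by omega)
  have habs : |2 * (x + m * -((2 * x + m) / (2 * m)))| ≤ |m| := by
    rw [abs_of_pos hm, abs_le]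
    constructor <;> linarith
  linarith [sq_le_sq.2 habs]

theorem hasSmallRemainders_int : HasSmallRemainders ℤ where
  exists_intCast_eq {x} _ := ⟨x, rfl⟩
  exists_remainder x m hm := by
    obtain ⟨k, hk⟩ := exists_four_mul_sq_add_mul_le hm x
    exact ⟨k, (x + m * k) ^ 2, by simp [sq], sq_nonneg _, by linarith [sq_nonneg (x + m * k)]⟩

theorem isGram_fin_two_of_det_eq_one {a b c : ℤ} (ha : 0 < a) (hdet : a * c - b ^ 2 = 1) :
    IsGram !![a, b; b, c] := by
  simpa only [Int.cast_id, star_trivial] using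
    hasSmallRemainders_int.isGram_of_det_eq_one (c := c) (x := b) ha
      (by simpa only [Int.cast_id, star_trivial, sq] using hdet)

theorem exists_binary_value_le {a b c d : ℤ} (hd : 0 < d) (ha : 0 < a)
    (hdet : a * c - b ^ 2 = d) : ∃ p q r s : ℤ, p * s - q * r = 1 ∧
      0 < a * p ^ 2 + 2 * b * p * q + c * q ^ 2 ∧
      3 * (a * p ^ 2 + 2 * b * p * q + c * q ^ 2) ^ 2 ≤ 4 * d := by
  induction hN : a.toNat using Nat.strong_induction_on generalizing a b c with
  | _ N ih =>
  obtain ⟨k, hk⟩ := exists_four_mul_sq_add_mul_le ha b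
  obtain ⟨c', hc'⟩ : ∃ c', c' = a * k ^ 2 + 2 * b * k + c := ⟨_, rfl⟩
  have hdet' : a * c' - (b + a * k) ^ 2 = d := by rw [hc', ← hdet]; ring
  have hc'_pos : 0 < c' :=
    pos_of_mul_pos_right (by nlinarith [sq_nonneg (b + a * k)] : 0 < a * c') ha.le
  rcases lt_or_ge c' a with hlt | hge
  · obtain ⟨p, q, r, s, hpqrs, hpos, hle⟩ := ih c'.toNat (by omega) hc'_pos
      (b := -(b + a * k)) (c := a) (by linarith) rfl
    have hvalue : c' * p ^ 2 + 2 * -(b + a * k) * p * q + a * q ^ 2 =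
        a * (k * p - q) ^ 2 + 2 * b * (k * p - q) * p + c * p ^ 2 := by rw [hc']; ring
    rw [hvalue] at hpos hle
    exact ⟨k * p - q, p, k * r - s, r, by linarith, hpos, hle⟩
  · have : a * a ≤ a * c' := mul_le_mul_of_nonneg_left hge ha.le
    exact ⟨1, 0, 0, 1, by norm_num, by simpa using ha, by nlinarith⟩

theorem lt_of_hermite_bound {a b f : ℤ} (ha : 2 ≤ a) (hpos : 0 < a * b - f ^ 2)
    (hle : 3 * (a * b - f ^ 2) ^ 2 ≤ 4 * a) (hf : 4 * f ^ 2 ≤ a ^ 2) : b < a := by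
  by_contra! hab
  obtain ⟨m, hm⟩ : ∃ m, m = a * b - f ^ 2 := ⟨_, rfl⟩
  rw [← hm] at hpos hle
  have hm' : 3 * a ^ 2 ≤ 4 * m := by nlinarith
  have hsq : (3 * a ^ 2) ^ 2 ≤ (4 * m) ^ 2 := pow_le_pow_left₀ (by positivity) hm' 2
  have hcube : 27 * a ^ 3 ≤ 64 := le_of_mul_le_mul_left (by nlinarith) (by omega : 0 < a)
  have : (2 : ℤ) ^ 3 ≤ a ^ 3 := pow_le_pow_left₀ (by norm_num) ha 3
  omega

theorem isGram_fin_three_of_schur {b c d e f : ℤ}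
    (h : IsGram !![b - f ^ 2, d - e * f; d - e * f, c - e ^ 2]) :
    IsGram !![1, f, e; f, b, d; e, d, c] := by
  obtain ⟨P, hP⟩ := h
  refine ⟨!![1, f, e; 0, P 0 0, P 0 1; 0, P 1 0, P 1 1], ?_⟩
  have h00 := congrFun₂ hP 0 0
  have h01 := congrFun₂ hP 0 1
  have h11 := congrFun₂ hP 1 1
  simp only [of_apply, cons_val', cons_val_zero, cons_val_fin_one, cons_val_one, mul_apply,
    conjTranspose_eq_transpose_of_trivial, transpose_apply, Fin.sum_univ_two] at h00 h01 h11
  ext i j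
  fin_cases i <;> fin_cases j <;> simp [mul_apply, Fin.sum_univ_three] <;> linarith

theorem exists_congr_fin_three_lt {a b c d e f : ℤ} (ha : 2 ≤ a) (hab : 0 < a * b - f ^ 2)
    (hdet : a * b * c + 2 * d * e * f - a * d ^ 2 - b * e ^ 2 - c * f ^ 2 = 1) :
    ∃ (Q : Matrix (Fin 3) (Fin 3) ℤ) (a' c' d' e' f' : ℤ), Q.det = -1 ∧ 0 < a' ∧ a' < a ∧
      0 < a' * a - f' ^ 2 ∧
      Qᴴ * !![a, f, e; f, b, d; e, d, c] * Q = !![a', f', e'; f', a, d'; e', d', c'] := by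
  obtain ⟨p, q, r, s, hpqrs, hpos, hle⟩ := exists_binary_value_le (a := a * b - f ^ 2)
    (b := a * d - e * f) (c := a * c - e ^ 2) (d := a) (by omega) hab
    (by linear_combination a * hdet)
  obtain ⟨k, hk⟩ := exists_four_mul_sq_add_mul_le (by omega : 0 < a) (f * p + e * q)
  obtain ⟨f', hf'⟩ : ∃ f', f' = f * p + e * q + a * k := ⟨_, rfl⟩
  obtain ⟨a', ha'⟩ : ∃ a', a' = a * k ^ 2 + b * p ^ 2 + c * q ^ 2 + 2 * d * p * q +
    2 * e * k * q + 2 * f * k * p := ⟨_, rfl⟩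
  have hminor : (a * b - f ^ 2) * p ^ 2 + 2 * (a * d - e * f) * p * q + (a * c - e ^ 2) * q ^ 2 =
      a * a' - f' ^ 2 := by rw [hf', ha']; ring
  rw [hminor] at hpos hle
  rw [← hf'] at hk
  refine ⟨!![k, 1, 0; p, 0, r; q, 0, s], a', b * r ^ 2 + 2 * d * r * s + c * s ^ 2,
    f * r + e * s, b * p * r + c * q * s + d * (p * s + q * r) + e * k * s + f * k * r, f',
    ?_, ?_, lt_of_hermite_bound ha hpos hle hk, by linarith, ?_⟩
  · rw [det_fin_three]
    simp only [of_apply, cons_val', cons_val_zero, cons_val_fin_one, cons_val_one, cons_val]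
    linear_combination -hpqrs
  · exact pos_of_mul_pos_right (by linarith [sq_nonneg f'] : 0 < a * a') (by omega)
  · ext i j
    fin_cases i <;> fin_cases j <;>
      simp [mul_apply, Fin.sum_univ_three, ha', hf'] <;> ring

/-- Hermite's descent: the top left entry `a` decreases under a suitable change of basis until
`a = 1`, when a square splits off. -/
theorem isGram_fin_three_of_det_eq_one {a b c d e f : ℤ} (ha : 0 < a) (hab : 0 < a * b - f ^ 2)
    (hdet : !![a, f, e; f, b, d; e, d, c].det = 1) : IsGram !![a, f, e; f, b, d; e, d, c] := by
  induction hN : a.toNat using Nat.strong_induction_on generalizing a b c d e f with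
  | _ N ih =>
  have hdet' : a * b * c + 2 * d * e * f - a * d ^ 2 - b * e ^ 2 - c * f ^ 2 = 1 := by
    rw [← hdet, det_fin_three]
    simp only [of_apply, cons_val', cons_val_zero, cons_val_fin_one, cons_val_one, cons_val]
    ring
  obtain rfl | ha2 : a = 1 ∨ 2 ≤ a := by omega
  · apply isGram_fin_three_of_schur
    exact isGram_fin_two_of_det_eq_one (by linarith) (by linear_combination hdet')
  obtain ⟨Q, a', c', d', e', f', hQ, ha', ha'_lt, hminor, hcongr⟩ :=
    exists_congr_fin_three_lt ha2 hab hdet'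
  refine IsGram.of_congr (Q := Q) (by simp [hQ]) ?_
  rw [hcongr]
  refine ih a'.toNat (by omega) ha' hminor ?_ rfl
  rw [← hcongr, det_mul, det_mul, det_conjTranspose, hdet, hQ]
  simp

/-! ### Sums of three squares -/

/-- `n` is a value of the diagonal form `a x² + b y² + c z²` over the integers. -/
def TernaryRep (a b c n : ℤ) : Prop := ∃ x y z : ℤ, n = a * x ^ 2 + b * y ^ 2 + c * z ^ 2

theorem IsGram.ternaryRep {M : Matrix (Fin 3) (Fin 3) ℤ} (hM : IsGram M) (i : Fin 3) :
    TernaryRep 1 1 1 (M i i) := by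
  obtain ⟨P, rfl⟩ := hM
  exact ⟨P 0 i, P 1 i, P 2 i, by simp [mul_apply, Fin.sum_univ_three, sq]⟩

theorem ternaryRep_of_isSquare_neg {m : ℕ} {d n : ℤ} (hd : 0 < d)
    (hdn : d * n = m + 1) (h : IsSquare ((-d : ℤ) : ZMod m)) : TernaryRep 1 1 1 n := by
  obtain ⟨b, hb⟩ := h
  obtain ⟨b, rfl⟩ := ZMod.intCast_surjective b
  obtain ⟨t, ht⟩ : (m : ℤ) ∣ b ^ 2 + d := by
    rw [← ZMod.intCast_zmod_eq_zero_iff_dvd]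
    push_cast at hb ⊢
    linear_combination -hb
  have ht_pos : 0 < t := pos_of_mul_pos_right (by rw [← ht]; positivity) (Int.natCast_nonneg m)
  have hgram : IsGram !![t, b, 1; b, (m : ℤ), 0; 1, 0, n] :=
    isGram_fin_three_of_det_eq_one ht_pos (by linarith) (by
      simp only [det_fin_three, of_apply, cons_val', cons_val_zero, cons_val_fin_one, cons_val_one,
        cons_val]
      linear_combination (-n) * ht + hdn)
  exact hgram.ternaryRep 2

theorem isSquare_intCast_zmod_mul {m n : ℕ} (hmn : m.Coprime n) {x : ℤ}
    (hm : IsSquare (x : ZMod m)) (hn : IsSquare (x : ZMod n)) :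
    IsSquare (x : ZMod (m * n)) := by
  obtain ⟨s, hs⟩ := hm
  obtain ⟨t, ht⟩ := hn
  refine ⟨(ZMod.chineseRemainder hmn).symm (s, t), ?_⟩
  rw [← map_mul, Prod.mk_mul_mk, ← hs, ← ht, RingEquiv.eq_symm_apply, map_intCast]
  rfl

theorem exists_prime_mul_add_one_eq {n k c m : ℕ} (hn : 0 < n) (hm : Odd m)
    (h : k * m + 1 = c * n) : ∃ p d : ℕ, p.Prime ∧ p ≡ m [MOD 4] ∧ d ≡ c [MOD 4 * k] ∧
      k * p + 1 = d * n := by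
  have hmn : m.Coprime n := by
    rw [← Nat.isCoprime_iff_coprime]
    exact ⟨-k, c, by linear_combination (by exact_mod_cast h.symm : (c * n : ℤ) = k * m + 1)⟩
  have hcop : m.Coprime (4 * n) :=
    Nat.Coprime.mul_right (by simpa using (Nat.coprime_two_right.2 hm).pow_right 2) hmn
  obtain ⟨p, hpm, hp, hmod⟩ := Nat.forall_exists_prime_gt_and_modEq m (by omega) hcop
  obtain ⟨j, hj⟩ := (Nat.modEq_iff_dvd' hpm.le).1 hmod.symm
  obtain rfl : p = 4 * n * j + m := by omega
  refine ⟨_, 4 * k * j + c, hp, hmod.of_mul_right n, ?_, ?_⟩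
  · simp [Nat.ModEq]
  · linear_combination h

/-- Reciprocity, combined with the first supplementary law. -/
theorem jacobiSym_neg_eq {d p : ℕ} (hd : Odd d) (hp : Odd p) (h : p % 4 = 3 → d % 4 = 3) :
    J(-d | p) = J(p | d) := by
  rw [jacobiSym.neg _ hp]
  obtain hp4 | hp4 := Nat.odd_mod_four_iff.1 (Nat.odd_iff.1 hp)
  · rw [ZMod.χ₄_nat_one_mod_four hp4, one_mul,
      jacobiSym.quadratic_reciprocity_one_mod_four' hd hp4]
  · rw [ZMod.χ₄_nat_three_mod_four hp4,
      jacobiSym.quadratic_reciprocity_three_mod_four (h hp4) hp4, neg_mul_neg, one_mul]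

/-- With `d n = p + 1`, reciprocity gives `(-d / p) = (p / d) = (-1 / d) = 1`. -/
theorem ternaryRep_of_mod_four_eq_two {n : ℕ} (hn : n % 4 = 2) : TernaryRep 1 1 1 n := by
  obtain ⟨p, d, hp, hpn, hd, hpd⟩ := exists_prime_mul_add_one_eq (n := n) (m := n - 1) (k := 1)
    (c := 1) (by omega) (Nat.odd_iff.2 (by omega)) (by omega)
  simp only [Nat.ModEq] at hpn hd
  have hd_odd : Odd d := Nat.odd_iff.2 (by omega)
  have hpd' : (d * n : ℤ) = p + 1 := by exact_mod_cast (by omega : d * n = p + 1)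
  have := Fact.mk hp
  refine ternaryRep_of_isSquare_neg (by omega) hpd' (ZMod.isSquare_of_jacobiSym_eq_one ?_)
  have hmod : p ≡ -1 [ZMOD d] := Int.modEq_iff_dvd.2 ⟨-n, by linear_combination hpd'⟩
  rw [jacobiSym_neg_eq hd_odd (Nat.odd_iff.2 (by omega)) (by omega), jacobiSym.mod_left' hmod,
    jacobiSym.at_neg_one hd_odd, ZMod.χ₄_nat_one_mod_four (by omega)]

theorem jacobiSym_eq_one_of_dvd_two_mul_add_one {a : ℤ} {d : ℕ} (hd : d % 8 = 1 ∨ d % 8 = 3)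
    (h : (d : ℤ) ∣ 2 * a + 1) : J(a | d) = 1 := by
  have hneg_two : J(-2 | d) = 1 := by
    rw [jacobiSym.at_neg_two (Nat.odd_iff.2 (by omega)), ZMod.χ₈'_nat_eq_if_mod_eight]
    obtain hd | hd := hd
    all_goals simp [hd]; omega
  calc J(a | d) = J(-2 * a | d) := by rw [jacobiSym.mul_left, hneg_two, one_mul]
    _ = J(1 | d) := jacobiSym.mod_left' (Int.modEq_iff_dvd.2 (by simpa [add_comm] using h))
    _ = 1 := jacobiSym.one_left d

/-- With `d n = 2 p + 1`, reciprocity gives `(-d / p) = (p / d) = (-2 / d) = 1`. The residue `c` of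
`d` modulo `8` is chosen so that `p` is odd and that `d ≡ 3 (mod 4)` whenever `p ≡ 3 (mod 4)`. -/
theorem ternaryRep_of_odd {n c : ℕ} (h : n % 8 = 3 ∧ c = 1 ∨ n % 4 = 1 ∧ c = 3) :
    TernaryRep 1 1 1 n := by
  obtain ⟨m, hm⟩ : ∃ m, 2 * m + 1 = c * n := by
    obtain ⟨h, rfl⟩ | ⟨h, rfl⟩ := h <;> exact ⟨_ / 2, Nat.two_mul_div_two_add_one_of_odd
      (Nat.odd_iff.2 (by omega))⟩
  have hm_odd : m % 2 = 1 := by obtain ⟨_, rfl⟩ | ⟨_, rfl⟩ := h <;> omega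
  have hmc : m % 4 = 3 → c % 4 = 3 := by obtain ⟨_, rfl⟩ | ⟨_, rfl⟩ := h <;> omega
  obtain ⟨p, d, hp, hpm, hd, hpd⟩ :=
    exists_prime_mul_add_one_eq (n := n) (by omega) (Nat.odd_iff.2 hm_odd) hm
  simp only [Nat.ModEq] at hpm hd
  have hp_odd : Odd p := Nat.odd_iff.2 (by omega)
  have hpd' : (d * n : ℤ) = (2 * p : ℕ) + 1 := by exact_mod_cast hpd.symm
  have := Fact.mk hp
  refine ternaryRep_of_isSquare_neg (by omega) hpd' (isSquare_intCast_zmod_mul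
    (Nat.coprime_two_left.2 hp_odd) ?_ (ZMod.isSquare_of_jacobiSym_eq_one ?_))
  · generalize ((-d : ℤ) : ZMod 2) = x
    revert x
    decide
  · rw [jacobiSym_neg_eq (Nat.odd_iff.2 (by omega)) hp_odd (by omega)]
    exact jacobiSym_eq_one_of_dvd_two_mul_add_one (by omega) ⟨n, by exact_mod_cast hpd'.symm⟩

theorem ternaryRep_one_one_one_of_not_four_dvd {n : ℤ} (hn : 0 ≤ n) (h4 : n % 4 ≠ 0)
    (h8 : n % 8 ≠ 7) : TernaryRep 1 1 1 n := by
  lift n to ℕ using hn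
  obtain h | h | h : n % 8 = 3 ∨ n % 4 = 1 ∨ n % 4 = 2 := by omega
  · exact ternaryRep_of_odd (.inl ⟨h, rfl⟩)
  · exact ternaryRep_of_odd (.inr ⟨h, rfl⟩)
  · exact ternaryRep_of_mod_four_eq_two h

theorem ternaryRep_one_one_one {n : ℤ} (hn : 0 ≤ n) (h8 : n % 8 ≠ 7) (h16 : n % 16 ≠ 0)
    (h32 : n % 32 ≠ 28) : TernaryRep 1 1 1 n := by
  by_cases h4 : n % 4 = 0
  · obtain ⟨m, rfl⟩ : ∃ m, n = 4 * m := ⟨n / 4, by omega⟩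
    obtain ⟨x, y, z, hm⟩ :=
      ternaryRep_one_one_one_of_not_four_dvd (n := m) (by omega) (by omega) (by omega)
    exact ⟨2 * x, 2 * y, 2 * z, by linear_combination 4 * hm⟩
  · exact ternaryRep_one_one_one_of_not_four_dvd hn h4 h8

/-! ### Ternary forms related to the sum of three squares -/

/-- `n` is a value of the form `a x² + b y² + c (z² + z w + w²)` over the integers. With `b = 0`
this says that `n` is a value of the ternary form `a x² + c (z² + z w + w²)`. -/
def Represents (a b c n : ℤ) : Prop :=
  ∃ x y z w : ℤ, n = a * x ^ 2 + b * y ^ 2 + c * (z ^ 2 + z * w + w ^ 2)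

section TernaryRep

variable {a b c n : ℤ}

theorem TernaryRep.swap_right : TernaryRep a b c n → TernaryRep a c b n
  | ⟨x, y, z, h⟩ => ⟨x, z, y, by rw [h]; ring⟩

theorem TernaryRep.one_one_four (h : TernaryRep 1 1 1 n) (hn : n % 4 ≠ 3) :
    TernaryRep 1 1 4 n := by
  obtain ⟨x, y, z, rfl⟩ := h
  obtain ⟨x, rfl | rfl⟩ := Int.even_or_odd' x
  · exact ⟨y, z, x, by ring⟩
  obtain ⟨y, rfl | rfl⟩ := Int.even_or_odd' y
  · exact ⟨2 * x + 1, z, y, by ring⟩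
  obtain ⟨z, rfl | rfl⟩ := Int.even_or_odd' z
  · exact ⟨2 * x + 1, 2 * y + 1, z, by ring⟩
  · ring_nf at hn
    omega

theorem TernaryRep.one_one_two (h : TernaryRep 1 1 4 (2 * n)) : TernaryRep 1 1 2 n := by
  obtain ⟨x, y, z, h⟩ := h
  obtain ⟨s, hs⟩ : Even (x + y) := by
    have : Even (x ^ 2 + y ^ 2) := ⟨n - 2 * z ^ 2, by linarith⟩
    simpa [Int.even_add, Int.even_pow] using this
  obtain rfl : y = 2 * s - x := by linarith
  exact ⟨s, x - s, z, by linarith⟩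

theorem TernaryRep.one_four_two (h : TernaryRep 1 1 2 n) : TernaryRep 1 4 2 n := by
  obtain ⟨x, y, z, rfl⟩ := h
  obtain ⟨x, rfl | rfl⟩ := Int.even_or_odd' x
  · exact ⟨y, x, z, by ring⟩
  obtain ⟨y, rfl | rfl⟩ := Int.even_or_odd' y
  · exact ⟨2 * x + 1, y, z, by ring⟩
  -- Of `s = x + y + 1` and `t = x - y`, one is congruent to `z` modulo `2`.
  obtain ⟨k, hk⟩ | ⟨k, hk⟩ : Even (z - (x + y + 1)) ∨ Even (z - (x - y)) := by
    simp only [Int.even_iff]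
    omega
  · obtain rfl : z = x + y + 1 + 2 * k := by linarith
    exact ⟨2 * (x + y + 1) + 2 * k, k, x - y, by ring⟩
  · obtain rfl : z = x - y + 2 * k := by linarith
    exact ⟨2 * (x - y) + 2 * k, k, x + y + 1, by ring⟩

theorem exists_sq_add_sq_eq_of_five_mul {m x y : ℤ} (h : x ^ 2 + y ^ 2 = 5 * m) :
    ∃ u v : ℤ, u ^ 2 + v ^ 2 = m := by
  obtain ⟨k, hk⟩ | ⟨k, hk⟩ : 5 ∣ x - 2 * y ∨ 5 ∣ x + 2 * y := by
    refine (Int.prime_ofNat_iff.2 Nat.prime_five).dvd_or_dvd ⟨m - y ^ 2, ?_⟩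
    linear_combination h
  · obtain rfl : x = 2 * y + 5 * k := by linarith
    exact ⟨y + 2 * k, k, by linarith⟩
  · obtain rfl : x = 5 * k - 2 * y := by linarith
    exact ⟨y - 2 * k, k, by linarith⟩

theorem TernaryRep.one_five_one (h : TernaryRep 1 1 1 (5 * n)) : TernaryRep 1 5 1 n := by
  suffices key : ∀ x y v : ℤ, x ^ 2 + y ^ 2 + (5 * v) ^ 2 = 5 * n → TernaryRep 1 5 1 n by
    obtain ⟨x, y, z, h⟩ := h
    have hsq (t : ℤ) : t % 5 = 0 ∨ t ^ 2 % 5 = 1 ∨ t ^ 2 % 5 = 4 := by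
      obtain ht | ht | ht | ht | ht :
        t % 5 = 0 ∨ t % 5 = 1 ∨ t % 5 = 2 ∨ t % 5 = 3 ∨ t % 5 = 4 := by omega
      all_goals simp [sq, Int.mul_emod, ht]
    obtain ⟨v, rfl⟩ | ⟨v, rfl⟩ | ⟨v, rfl⟩ : 5 ∣ x ∨ 5 ∣ y ∨ 5 ∣ z := by
      have := hsq x
      have := hsq y
      have := hsq z
      omega
    · exact key y z v (by linarith)
    · exact key x z v (by linarith)
    · exact key x y v (by linarith)
  intro x y v h
  obtain ⟨u, w, huw⟩ := exists_sq_add_sq_eq_of_five_mul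
    (by linarith : x ^ 2 + y ^ 2 = 5 * (n - 5 * v ^ 2))
  exact ⟨u, v, w, by linarith⟩

theorem TernaryRep.exists_emod_three (h : TernaryRep 1 1 1 n) : ∃ x y z : ℤ,
    n = x ^ 2 + y ^ 2 + z ^ 2 ∧ (x % 3 = 0 ∨ x % 3 = 1) ∧ (y % 3 = 0 ∨ y % 3 = 1) ∧
      (z % 3 = 0 ∨ z % 3 = 1) ∧ n % 3 = (x + y + z) % 3 := by
  have hsign (t : ℤ) : ∃ s, s ^ 2 = t ^ 2 ∧ (s % 3 = 0 ∨ s % 3 = 1) := by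
    by_cases ht : t % 3 = 2
    · exact ⟨-t, by ring, by omega⟩
    · exact ⟨t, rfl, by omega⟩
  have hsq {t : ℤ} (ht : t % 3 = 0 ∨ t % 3 = 1) : t ^ 2 % 3 = t % 3 := by
    obtain ht | ht := ht <;> simp [sq, Int.mul_emod, ht]
  obtain ⟨x, y, z, rfl⟩ := h
  obtain ⟨x', hx, hx'⟩ := hsign x
  obtain ⟨y', hy, hy'⟩ := hsign y
  obtain ⟨z', hz, hz'⟩ := hsign z
  refine ⟨x', y', z', by linarith, hx', hy', hz', ?_⟩
  have := hsq hx'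
  have := hsq hy'
  have := hsq hz'
  omega

/-- This rests on the identity `3 (x² + y² + z²) = (x + y + z)² + 2 L(x - y, y - z)`, where
`L(u, v) = u² + u v + v²`. -/
theorem TernaryRep.represents_one_zero_two (h : TernaryRep 1 1 1 (3 * n)) :
    Represents 1 0 2 n := by
  obtain ⟨x, y, z, h, hx, hy, hz, hmod⟩ := h.exists_emod_three
  obtain ⟨p, hp⟩ : 3 ∣ x - y := by omega
  obtain ⟨q, hq⟩ : 3 ∣ y - z := by omega
  obtain rfl : y = z + 3 * q := by linarith
  obtain rfl : x = z + 3 * q + 3 * p := by linarith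
  exact ⟨z + 2 * q + p, 0, p, q, by linarith⟩

theorem TernaryRep.represents_three_zero_two (h : TernaryRep 1 1 1 n) (hn : n % 3 ≠ 1) :
    Represents 3 0 2 n := by
  obtain ⟨x, y, z, h, s, hs⟩ : ∃ x y z : ℤ, n = x ^ 2 + y ^ 2 + z ^ 2 ∧ 3 ∣ x + y + z := by
    obtain ⟨x, y, z, h, hx, hy, hz, hmod⟩ := h.exists_emod_three
    by_cases hx1 : (x + y + z) % 3 = 2 ∧ x % 3 = 1
    · exact ⟨-x, y, z, by rw [h]; ring, by omega⟩
    by_cases hx0 : (x + y + z) % 3 = 2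
    · exact ⟨x, -y, z, by rw [h]; ring, by omega⟩
    · exact ⟨x, y, z, h, by omega⟩
  obtain rfl : z = 3 * s - x - y := by linarith
  exact ⟨s, 0, x - s, y - s, by rw [h]; ring⟩

theorem Represents.of_two_mul (ha : Odd a) (h : Represents a 0 2 (2 * n)) :
    Represents (2 * a) 0 1 n := by
  obtain ⟨x, y, z, w, h⟩ := h
  obtain ⟨t, rfl⟩ : 2 ∣ x := by
    have : Even (a * x ^ 2) := ⟨n - (z ^ 2 + z * w + w ^ 2), by linarith⟩
    simpa [Int.even_mul, Int.even_pow, Int.not_even_iff_odd.2 ha, ← even_iff_two_dvd] using this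
  exact ⟨t, 0, z, w, by linarith⟩

theorem ternaryRep_one_four_one (hn : 0 ≤ n) (h4 : n % 4 ≠ 3) (h16 : n % 16 ≠ 0)
    (h32 : n % 32 ≠ 28) : TernaryRep 1 4 1 n :=
  ((ternaryRep_one_one_one hn (by omega) (by omega) (by omega)).one_one_four (by omega)).swap_right

theorem ternaryRep_one_one_two (hn : 0 ≤ n) (h8 : n % 8 ≠ 0) (h16 : n % 16 ≠ 14) :
    TernaryRep 1 1 2 n :=
  ((ternaryRep_one_one_one (n := 2 * n) (by omega) (by omega) (by omega)
    (by omega)).one_one_four (by omega)).one_one_two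

theorem ternaryRep_one_five_one (hn : 0 ≤ n) (h8 : n % 8 ≠ 3) (h16 : n % 16 ≠ 0)
    (h32 : n % 32 ≠ 12) : TernaryRep 1 5 1 n :=
  (ternaryRep_one_one_one (by omega) (by omega) (by omega) (by omega)).one_five_one

theorem represents_one_zero_two (hn : 0 ≤ n) (h8 : n % 8 ≠ 5) (h16 : n % 16 ≠ 0)
    (h32 : n % 32 ≠ 20) : Represents 1 0 2 n :=
  (ternaryRep_one_one_one (by omega) (by omega) (by omega) (by omega)).represents_one_zero_two

theorem represents_two_zero_one (hn : 0 ≤ n) (h8 : n % 8 ≠ 0) (h16 : n % 16 ≠ 10) :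
    Represents 2 0 1 n :=
  (represents_one_zero_two (n := 2 * n) (by omega) (by omega) (by omega) (by omega)).of_two_mul
    odd_one

theorem represents_six_zero_one (hn : 0 ≤ n) (h3 : n % 3 ≠ 2) (h8 : n % 8 ≠ 0)
    (h16 : n % 16 ≠ 14) : Represents 6 0 1 n :=
  ((ternaryRep_one_one_one (n := 2 * n) (by omega) (by omega) (by omega)
    (by omega)).represents_three_zero_two (by omega)).of_two_mul (by decide)

theorem exists_sq_add_three_mul_sq_eq (z w : ℤ) :
    ∃ u v : ℤ, z ^ 2 + z * w + w ^ 2 = u ^ 2 + 3 * v ^ 2 := by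
  obtain ⟨t, ht⟩ | ⟨t, ht⟩ | ⟨t, ht⟩ : Even z ∨ Even w ∨ Even (z + w) := by
    simp only [Int.even_iff]
    omega
  · exact ⟨t + w, t, by rw [ht]; ring⟩
  · exact ⟨z + t, t, by rw [ht]; ring⟩
  · obtain rfl : w = t + t - z := by linarith
    exact ⟨t - z, t, by ring⟩

theorem ternaryRep_one_two_three (hn : 0 ≤ n) (h8 : n % 8 ≠ 0) (h16 : n % 16 ≠ 10) :
    TernaryRep 1 2 3 n := by
  obtain ⟨x, y, z, w, h⟩ := represents_two_zero_one hn h8 h16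
  obtain ⟨u, v, huv⟩ := exists_sq_add_three_mul_sq_eq z w
  exact ⟨u, x, v, by linarith⟩

end TernaryRep

/-! ### Sums of two Eisenstein norms -/

/-- The ring `ℤ[ω]` of Eisenstein integers with `ω² = ω - 1`, so that `z + w ω` has norm
`z² + z w + w²`. -/
abbrev EisensteinInt : Type := QuadraticAlgebra ℤ (-1) 1

namespace EisensteinInt

theorem star_mul_self (x : EisensteinInt) :
    star x * x = ((x.re ^ 2 + x.re * x.im + x.im ^ 2 : ℤ) : EisensteinInt) := by
  ext
  · rw [QuadraticAlgebra.re_intCast, Int.cast_id, QuadraticAlgebra.re_mul,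
      QuadraticAlgebra.re_star, QuadraticAlgebra.im_star]
    ring
  · rw [QuadraticAlgebra.im_intCast, QuadraticAlgebra.im_mul, QuadraticAlgebra.re_star,
      QuadraticAlgebra.im_star]
    ring

theorem hasSmallRemainders : HasSmallRemainders EisensteinInt where
  exists_intCast_eq {x} hx := by
    have him : x.im = 0 := by
      have := congrArg QuadraticAlgebra.im hx
      rw [QuadraticAlgebra.im_star] at this
      omega
    exact ⟨x.re, by ext <;> simp [him]⟩
  exists_remainder x m hm := by
    obtain ⟨l, hl⟩ := exists_four_mul_sq_add_mul_le hm x.im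
    obtain ⟨k, hk⟩ := exists_four_mul_sq_add_mul_le (by omega : 0 < 2 * m)
      (2 * x.re + (x.im + m * l))
    have hre : (x + m * (⟨k, l⟩ : EisensteinInt)).re = x.re + m * k := by simp
    have him : (x + m * (⟨k, l⟩ : EisensteinInt)).im = x.im + m * l := by simp
    refine ⟨⟨k, l⟩, _, star_mul_self _, ?_, ?_⟩ <;> rw [hre, him]
    · nlinarith [sq_nonneg (2 * (x.re + m * k) + (x.im + m * l)), sq_nonneg (x.im + m * l)]
    · nlinarith

end EisensteinInt

open Polynomial in
theorem exists_dvd_sq_add_mul_sq_add_one {p : ℕ} [Fact p.Prime] (hp2 : p ≠ 2) {k : ℤ}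
    (hk : ¬(p : ℤ) ∣ k) : ∃ u v : ℤ, (p : ℤ) ∣ u ^ 2 + k * v ^ 2 + 1 := by
  have hk0 : (k : ZMod p) ≠ 0 := mt (ZMod.intCast_zmod_eq_zero_iff_dvd k p).1 hk
  have hodd : Fintype.card (ZMod p) % 2 = 1 := by
    rw [ZMod.card]
    exact ((Fact.out : p.Prime).eq_two_or_odd).resolve_left hp2
  obtain ⟨u, v, huv⟩ := FiniteField.exists_root_sum_quadratic
    (f := X ^ 2 + C 1) (g := C (k : ZMod p) * X ^ 2) (degree_X_pow_add_C two_pos 1)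
    (degree_C_mul_X_pow 2 hk0) hodd
  refine ⟨u.valMinAbs, v.valMinAbs, (ZMod.intCast_zmod_eq_zero_iff_dvd _ p).1 ?_⟩
  simp only [eval_add, eval_mul, eval_pow, eval_X, eval_C] at huv
  push_cast
  rw [← huv]
  ring

/-- `n` is a sum of two norms of Eisenstein integers. -/
def IsSumTwoEisensteinNorms (n : ℤ) : Prop :=
  ∃ x y : EisensteinInt, (n : EisensteinInt) = star x * x + star y * y

namespace IsSumTwoEisensteinNorms

theorem mul {m n : ℤ} (hm : IsSumTwoEisensteinNorms m) (hn : IsSumTwoEisensteinNorms n) :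
    IsSumTwoEisensteinNorms (m * n) := by
  obtain ⟨x, y, hm⟩ := hm
  obtain ⟨u, v, hn⟩ := hn
  refine ⟨x * star u + y * star v, x * v - y * u, ?_⟩
  simp only [Int.cast_mul, hm, hn, star_add, star_sub, star_mul, star_star]
  ring

/-- Since `n m - ‖x‖ = 1`, the Hermitian form with matrix `!![n, x; star x, m]` is a sum of two
norms. -/
theorem of_dvd_sq_add_three_mul_sq_add_one {n u v : ℤ} (hn : 0 < n)
    (h : n ∣ u ^ 2 + 3 * v ^ 2 + 1) : IsSumTwoEisensteinNorms n := by
  obtain ⟨m, hm⟩ := h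
  have hnorm : star (⟨u - v, 2 * v⟩ : EisensteinInt) * ⟨u - v, 2 * v⟩ = (n * m - 1 : ℤ) := by
    rw [EisensteinInt.star_mul_self]
    congr 1
    linarith
  obtain ⟨P, hP⟩ := EisensteinInt.hasSmallRemainders.isGram_of_det_eq_one (c := m) hn
    (by rw [hnorm]; push_cast; ring)
  refine ⟨P 0 0, P 1 0, ?_⟩
  simpa [mul_apply, Fin.sum_univ_two] using congrFun₂ hP 0 0

theorem natCast_of_prime {p : ℕ} (hp : p.Prime) : IsSumTwoEisensteinNorms p := by
  have hpos : (0 : ℤ) < p := by exact_mod_cast hp.pos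
  have := Fact.mk hp
  obtain rfl | hp3 := eq_or_ne p 3
  · exact ⟨⟨1, 1⟩, 0, by rw [EisensteinInt.star_mul_self]; simp⟩
  obtain rfl | hp2 := eq_or_ne p 2
  · exact of_dvd_sq_add_three_mul_sq_add_one (u := 1) (v := 0) hpos (by norm_num)
  obtain ⟨u, v, h⟩ := exists_dvd_sq_add_mul_sq_add_one hp2 (k := 3) <| by
    exact_mod_cast (Nat.prime_dvd_prime_iff_eq hp Nat.prime_three).not.2 hp3
  exact of_dvd_sq_add_three_mul_sq_add_one hpos h

theorem natCast (n : ℕ) : IsSumTwoEisensteinNorms n := by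
  induction n using Nat.recOnMul with
  | zero => exact ⟨0, 0, by simp⟩
  | one => exact ⟨1, 0, by simp⟩
  | prime p hp => exact natCast_of_prime hp
  | mul m n hm hn => exact_mod_cast hm.mul hn

end IsSumTwoEisensteinNorms

/-! ### The universal quaternary forms -/

/-- The form `a x² + b y² + c (z² + z w + w²)` represents every nonnegative integer. -/
def IsUniversal (a b c : ℤ) : Prop := ∀ ⦃n : ℤ⦄, 0 ≤ n → Represents a b c n

section Universal

variable {a b c n : ℤ}

theorem Represents.swap : Represents a b c n → Represents b a c n
  | ⟨x, y, z, w, h⟩ => ⟨y, x, z, w, by rw [h]; ring⟩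

theorem Represents.of_sub_mul_sq (k : ℤ) (h : Represents a 0 c (n - b * k ^ 2)) :
    Represents a b c n := by
  obtain ⟨x, y, z, w, h⟩ := h
  exact ⟨x, k, z, w, by linarith⟩

/-- Since `z² + z w + w² = u² + 3 v²` for `z = u - v` and `w = 2 v`. -/
theorem TernaryRep.represents (k : ℤ) (h : TernaryRep a b c (n - 3 * c * k ^ 2)) :
    Represents a b c n := by
  obtain ⟨x, y, z, h⟩ := h
  exact ⟨x, y, z - k, 2 * k, by linarith⟩

theorem isUniversal_of_not_four_dvd (h : ∀ n, 0 ≤ n → n % 4 ≠ 0 → Represents a b c n) :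
    IsUniversal a b c := by
  intro n hn
  induction hN : n.toNat using Nat.strong_induction_on generalizing n with
  | _ N ih =>
  by_cases h4 : n % 4 = 0
  · obtain rfl | hpos := hn.eq_or_lt
    · exact ⟨0, 0, 0, 0, by ring⟩
    obtain ⟨m, rfl⟩ : ∃ m, n = 4 * m := ⟨n / 4, by omega⟩
    obtain ⟨x, y, z, w, hm⟩ := ih m.toNat (by omega) (by omega) rfl
    exact ⟨2 * x, 2 * y, 2 * z, 2 * w, by linear_combination 4 * hm⟩
  · exact h n hn h4

theorem isUniversal_two_right_one (h2 : 2 ≤ b) (h10 : b ≤ 10) : IsUniversal 2 b 1 := by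
  refine isUniversal_of_not_four_dvd fun n hn h4 => ?_
  have of_sub (k : ℤ) (hk : 0 ≤ n - b * k ^ 2) (h8 : (n - b * k ^ 2) % 8 ≠ 0)
      (h16 : (n - b * k ^ 2) % 16 ≠ 10) : Represents 2 b 1 n :=
    (represents_two_zero_one hk h8 h16).of_sub_mul_sq k
  by_cases h16 : n % 16 ≠ 10
  · exact of_sub 0 (by omega) (by omega) (by omega)
  push Not at h16
  obtain hb | rfl | rfl : b ≠ 2 ∧ b ≠ 10 ∨ b = 2 ∨ b = 10 := by omega
  · exact of_sub 1 (by omega) (by omega) (by omega)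
  · exact of_sub 2 (by omega) (by omega) (by omega)
  obtain rfl | rfl | hn40 : n = 10 ∨ n = 26 ∨ 40 ≤ n := by omega
  · exact ⟨0, 1, 0, 0, by norm_num⟩
  · exact ⟨0, 1, 4, 0, by norm_num⟩
  · exact of_sub 2 (by omega) (by omega) (by omega)

theorem isUniversal_one_right_two (h1 : 1 ≤ b) (h5 : b ≤ 5) : IsUniversal 1 b 2 := by
  refine isUniversal_of_not_four_dvd fun n hn h4 => ?_
  have of_sub (k : ℤ) (hk : 0 ≤ n - b * k ^ 2) (h8 : (n - b * k ^ 2) % 8 ≠ 5)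
      (h16 : (n - b * k ^ 2) % 16 ≠ 0) (h32 : (n - b * k ^ 2) % 32 ≠ 20) : Represents 1 b 2 n :=
    (represents_one_zero_two hk h8 h16 h32).of_sub_mul_sq k
  by_cases h8 : n % 8 ≠ 5
  · exact of_sub 0 (by omega) (by omega) (by omega) (by omega)
  push Not at h8
  obtain hb | rfl | rfl : b ≠ 1 ∧ b ≠ 5 ∨ b = 1 ∨ b = 5 := by omega
  · exact of_sub 1 (by omega) (by omega) (by omega) (by omega)
  · exact of_sub 2 (by omega) (by omega) (by omega) (by omega)
  obtain rfl | rfl | hn20 : n = 5 ∨ n = 13 ∨ 20 ≤ n := by omega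
  · exact ⟨0, 1, 0, 0, by norm_num⟩
  · exact ⟨0, 1, 2, 0, by norm_num⟩
  · exact of_sub 2 (by omega) (by omega) (by omega) (by omega)

theorem isUniversal_one_two_three : IsUniversal 1 2 3 := by
  refine isUniversal_of_not_four_dvd fun n hn h4 => ?_
  by_cases h16 : n % 16 = 10
  · exact (ternaryRep_one_two_three (by omega) (by omega) (by omega)).represents 1
  · exact (ternaryRep_one_two_three (by omega) (by omega) (by omega)).represents 0

theorem isUniversal_one_two_four : IsUniversal 1 2 4 := by
  refine isUniversal_of_not_four_dvd fun n hn h4 => ?_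
  by_cases h16 : n % 16 = 14
  · exact (ternaryRep_one_one_two (by omega) (by omega)
      (by omega)).one_four_two.swap_right.represents 1
  · exact (ternaryRep_one_one_two (by omega) (by omega)
      (by omega)).one_four_two.swap_right.represents 0

theorem isUniversal_one_one_one : IsUniversal 1 1 1 := by
  refine isUniversal_of_not_four_dvd fun n hn h4 => ?_
  obtain h8 | rfl | ⟨h8, hn15⟩ : n % 8 ≠ 7 ∨ n = 7 ∨ n % 8 = 7 ∧ 15 ≤ n := by omega
  · exact (ternaryRep_one_one_one (by omega) (by omega) (by omega) (by omega)).represents 0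
  · exact ⟨0, 0, 2, 1, by norm_num⟩
  · exact (ternaryRep_one_one_one (by omega) (by omega) (by omega) (by omega)).represents 2

theorem isUniversal_one_two_one : IsUniversal 1 2 1 := by
  refine isUniversal_of_not_four_dvd fun n hn h4 => ?_
  by_cases h16 : n % 16 = 14
  · exact (ternaryRep_one_one_two (by omega) (by omega) (by omega)).swap_right.represents 1
  · exact (ternaryRep_one_one_two (by omega) (by omega) (by omega)).swap_right.represents 0

theorem isUniversal_one_four_one : IsUniversal 1 4 1 := by
  refine isUniversal_of_not_four_dvd fun n hn h4 => ?_
  have of_sub (k : ℤ) (hk : 0 ≤ n - 3 * 1 * k ^ 2) (h4 : (n - 3 * 1 * k ^ 2) % 4 ≠ 3)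
      (h16 : (n - 3 * 1 * k ^ 2) % 16 ≠ 0) (h32 : (n - 3 * 1 * k ^ 2) % 32 ≠ 28) :
      Represents 1 4 1 n := (ternaryRep_one_four_one hk h4 h16 h32).represents k
  by_cases h3 : n % 4 ≠ 3
  · exact of_sub 0 (by omega) (by omega) (by omega) (by omega)
  by_cases hne : n % 16 ≠ 3 ∧ n % 32 ≠ 31
  · exact of_sub 1 (by omega) (by omega) (by omega) (by omega)
  obtain rfl | rfl | hn27 : n = 3 ∨ n = 19 ∨ 27 ≤ n := by omega
  · exact ⟨0, 0, 1, 1, by norm_num⟩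
  · exact ⟨0, 0, 3, 2, by norm_num⟩
  · exact of_sub 3 (by omega) (by omega) (by omega) (by omega)

theorem isUniversal_one_five_one : IsUniversal 1 5 1 := by
  refine isUniversal_of_not_four_dvd fun n hn h4 => ?_
  obtain h8 | rfl | rfl | ⟨h8, hn19⟩ : n % 8 ≠ 3 ∨ n = 3 ∨ n = 11 ∨ n % 8 = 3 ∧ 19 ≤ n := by
    omega
  · exact (ternaryRep_one_five_one (by omega) (by omega) (by omega) (by omega)).represents 0
  · exact ⟨0, 0, 1, 1, by norm_num⟩
  · exact ⟨2, 0, 2, 1, by norm_num⟩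
  · exact (ternaryRep_one_five_one (by omega) (by omega) (by omega) (by omega)).represents 2

theorem isUniversal_one_six_one : IsUniversal 1 6 1 := by
  refine isUniversal_of_not_four_dvd fun n hn h4 => Represents.swap ?_
  have of_sub (k : ℤ) (hk : 0 ≤ n - 1 * k ^ 2) (h3 : (n - 1 * k ^ 2) % 3 ≠ 2)
      (h8 : (n - 1 * k ^ 2) % 8 ≠ 0) (h16 : (n - 1 * k ^ 2) % 16 ≠ 14) : Represents 6 1 1 n :=
    (represents_six_zero_one hk h3 h8 h16).of_sub_mul_sq k
  by_cases h3 : n % 3 = 2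
  · by_cases h2 : n % 2 = 0
    · exact of_sub 1 (by omega) (by omega) (by omega) (by omega)
    · exact of_sub 2 (by omega) (by omega) (by omega) (by omega)
  by_cases h16 : n % 16 = 14
  · exact of_sub 3 (by omega) (by omega) (by omega) (by omega)
  · exact of_sub 0 (by omega) (by omega) (by omega) (by omega)

theorem isUniversal_one_three_one : IsUniversal 1 3 1 := by
  intro n hn
  lift n to ℕ using hn
  obtain ⟨x, y, hn⟩ := IsSumTwoEisensteinNorms.natCast n
  rw [EisensteinInt.star_mul_self, EisensteinInt.star_mul_self] at hn
  norm_cast at hn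
  obtain ⟨u, v, huv⟩ := exists_sq_add_three_mul_sq_eq x.re x.im
  exact ⟨u, v, y.re, y.im, by linarith⟩

theorem isUniversal_one_right_one (h1 : 1 ≤ b) (h6 : b ≤ 6) : IsUniversal 1 b 1 := by
  obtain rfl | rfl | rfl | rfl | rfl | rfl :
    b = 1 ∨ b = 2 ∨ b = 3 ∨ b = 4 ∨ b = 5 ∨ b = 6 := by omega
  exacts [isUniversal_one_one_one, isUniversal_one_two_one, isUniversal_one_three_one,
    isUniversal_one_four_one, isUniversal_one_five_one, isUniversal_one_six_one]

end Universal

/-! ### Small values -/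

section SmallValues

variable {a b c n : ℤ}

theorem sq_add_mul_add_sq_nonneg (z w : ℤ) : 0 ≤ z ^ 2 + z * w + w ^ 2 := by
  obtain ⟨u, v, huv⟩ := exists_sq_add_three_mul_sq_eq z w
  rw [huv]
  positivity

theorem sq_mem_of_le_ten (x : ℤ) (h : x ^ 2 ≤ 10) : x ^ 2 ∈ ({0, 1, 4, 9} : Finset ℤ) := by
  obtain ⟨hlo, hhi⟩ : -4 < x ∧ x < 4 :=
    abs_lt.1 (abs_lt_of_sq_lt_sq (by linarith) (by norm_num))
  interval_cases x <;> decide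

theorem sq_add_mul_add_sq_mem_of_le_ten (z w : ℤ) (h : z ^ 2 + z * w + w ^ 2 ≤ 10) :
    z ^ 2 + z * w + w ^ 2 ∈ ({0, 1, 3, 4, 7, 9} : Finset ℤ) := by
  obtain ⟨u, v, huv⟩ := exists_sq_add_three_mul_sq_eq z w
  rw [huv] at h ⊢
  have hu := sq_mem_of_le_ten u (by nlinarith [sq_nonneg v])
  have hv := sq_mem_of_le_ten v (by nlinarith [sq_nonneg u])
  simp only [Finset.mem_insert, Finset.mem_singleton] at hu hv ⊢
  omega

theorem exists_mul_eq_of_le_ten {t : ℤ} {s : Finset ℤ} (ha : 0 ≤ a) (h0 : 0 ∈ s)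
    (hs : t ≤ 10 → t ∈ s) (h : a * t ≤ 10) : ∃ t' ∈ s, a * t' = a * t := by
  obtain rfl | ha := ha.eq_or_lt
  · exact ⟨0, h0, by simp⟩
  · exact ⟨t, hs (by nlinarith), rfl⟩

theorem Represents.exists_of_le_ten (ha : 0 ≤ a) (hb : 0 ≤ b) (hc : 0 ≤ c) (hn : n ≤ 10)
    (h : Represents a b c n) :
    ∃ r ∈ ({0, 1, 4, 9} : Finset ℤ), ∃ s ∈ ({0, 1, 4, 9} : Finset ℤ),
      ∃ t ∈ ({0, 1, 3, 4, 7, 9} : Finset ℤ), n = a * r + b * s + c * t := by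
  obtain ⟨x, y, z, w, rfl⟩ := h
  have hL := sq_add_mul_add_sq_nonneg z w
  have hax := mul_nonneg ha (sq_nonneg x)
  have hby := mul_nonneg hb (sq_nonneg y)
  have hcL := mul_nonneg hc hL
  obtain ⟨r, hr, hr'⟩ := exists_mul_eq_of_le_ten (s := {0, 1, 4, 9}) ha (by decide)
    (sq_mem_of_le_ten x) (by linarith)
  obtain ⟨s, hs, hs'⟩ := exists_mul_eq_of_le_ten (s := {0, 1, 4, 9}) hb (by decide)
    (sq_mem_of_le_ten y) (by linarith)
  obtain ⟨t, ht, ht'⟩ := exists_mul_eq_of_le_ten (s := {0, 1, 3, 4, 7, 9}) hc (by decide)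
    (sq_add_mul_add_sq_mem_of_le_ten z w) (by linarith)
  exact ⟨r, hr, s, hs, t, ht, by rw [hr', hs', ht']⟩

theorem not_represents_of_forall_ne (ha : 0 ≤ a) (hb : 0 ≤ b) (hc : 0 ≤ c) (hn : n ≤ 10)
    (h : ∀ r ∈ ({0, 1, 4, 9} : Finset ℤ), ∀ s ∈ ({0, 1, 4, 9} : Finset ℤ),
      ∀ t ∈ ({0, 1, 3, 4, 7, 9} : Finset ℤ), n ≠ a * r + b * s + c * t) :
    ¬Represents a b c n := fun hrep => by
  obtain ⟨r, hr, s, hs, t, ht, heq⟩ := hrep.exists_of_le_ten ha hb hc hn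
  exact h r hr s hs t ht heq

theorem Represents.second_coeff_le (ha : 0 ≤ a) (hb : 0 ≤ b) (hc : 0 ≤ c) (h0 : ¬Represents a 0 c n)
    (h : Represents a b c n) : b ≤ n := by
  obtain ⟨x, y, z, w, h⟩ := h
  have hy : y ≠ 0 := by
    rintro rfl
    exact h0 ⟨x, 0, z, w, by linarith⟩
  have hL := sq_add_mul_add_sq_nonneg z w
  have hby : b * 1 ≤ b * y ^ 2 := mul_le_mul_of_nonneg_left (by
    have : 0 < y ^ 2 := by positivity
    omega) hb
  linarith [mul_nonneg ha (sq_nonneg x), mul_nonneg hc hL]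

theorem Represents.third_coeff_le (ha : 0 ≤ a) (hb : 0 ≤ b) (hc : 0 ≤ c) (h0 : ¬Represents a b 0 n)
    (h : Represents a b c n) : c ≤ n := by
  obtain ⟨x, y, z, w, h⟩ := h
  have hL := sq_add_mul_add_sq_nonneg z w
  have hL0 : z ^ 2 + z * w + w ^ 2 ≠ 0 := fun hL0 => h0 ⟨x, y, 0, 0, by rw [h, hL0]; ring⟩
  have hcL : c * 1 ≤ c * (z ^ 2 + z * w + w ^ 2) := mul_le_mul_of_nonneg_left (by omega) hc
  linarith [mul_nonneg ha (sq_nonneg x), mul_nonneg hb (sq_nonneg y)]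

theorem eq_of_represents_one_two (ha : 0 < a) (hab : a ≤ b) (hc : 0 < c)
    (h1 : Represents a b c 1) (h2 : Represents a b c 2) :
    a = 2 ∧ c = 1 ∨ a = 1 ∧ (c = 1 ∨ c = 2 ∨ b ≤ 2) := by
  have hb : 0 < b := by omega
  have h1' : a = 1 ∨ c = 1 := by
    obtain ⟨r, hr, s, hs, t, ht, heq⟩ := h1.exists_of_le_ten ha.le hb.le hc.le (by norm_num)
    fin_cases hr <;> fin_cases hs <;> fin_cases ht <;> omega
  obtain ⟨r, hr, s, hs, t, ht, heq⟩ := h2.exists_of_le_ten ha.le hb.le hc.le (by norm_num)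
  fin_cases hr <;> fin_cases hs <;> fin_cases ht <;> omega

theorem isUniversal_of_represents_ten (hb : 2 ≤ b) (h10 : Represents 2 b 1 10) :
    IsUniversal 2 b 1 := by
  have h0 : ¬Represents 2 0 1 10 :=
    not_represents_of_forall_ne (by norm_num) le_rfl (by norm_num) le_rfl (by decide)
  exact isUniversal_two_right_one hb
    (h10.second_coeff_le (by norm_num) (by omega) (by norm_num) h0)

theorem isUniversal_of_represents_six (hb : 1 ≤ b) (h6 : Represents 1 b 1 6) :
    IsUniversal 1 b 1 := by
  have h0 : ¬Represents 1 0 1 6 :=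
    not_represents_of_forall_ne (by norm_num) le_rfl (by norm_num) (by norm_num) (by decide)
  exact isUniversal_one_right_one hb
    (h6.second_coeff_le (by norm_num) (by omega) (by norm_num) h0)

theorem isUniversal_of_represents_five (hb : 1 ≤ b) (h5 : Represents 1 b 2 5) :
    IsUniversal 1 b 2 := by
  have h0 : ¬Represents 1 0 2 5 :=
    not_represents_of_forall_ne (by norm_num) le_rfl (by norm_num) (by norm_num) (by decide)
  exact isUniversal_one_right_two hb
    (h5.second_coeff_le (by norm_num) (by omega) (by norm_num) h0)

theorem isUniversal_of_represents_three_six (hc : 1 ≤ c) (h3 : Represents 1 1 c 3)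
    (h6 : Represents 1 1 c 6) : IsUniversal 1 1 c := by
  have h0 : ¬Represents 1 1 0 3 :=
    not_represents_of_forall_ne (by norm_num) (by norm_num) le_rfl (by norm_num) (by decide)
  have hc3 : c ≤ 3 := h3.third_coeff_le (by norm_num) (by norm_num) (by omega) h0
  obtain rfl | rfl | rfl : c = 1 ∨ c = 2 ∨ c = 3 := by omega
  · exact isUniversal_one_one_one
  · exact isUniversal_one_right_two le_rfl (by norm_num)
  · exact absurd h6 <| not_represents_of_forall_ne (by norm_num) (by norm_num) (by norm_num)
      (by norm_num) (by decide)

theorem isUniversal_of_represents_five_ten (hc : 1 ≤ c) (h5 : Represents 1 2 c 5)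
    (h10 : Represents 1 2 c 10) : IsUniversal 1 2 c := by
  have h0 : ¬Represents 1 2 0 5 :=
    not_represents_of_forall_ne (by norm_num) (by norm_num) le_rfl (by norm_num) (by decide)
  have hc5 : c ≤ 5 := h5.third_coeff_le (by norm_num) (by norm_num) (by omega) h0
  obtain rfl | rfl | rfl | rfl | rfl : c = 1 ∨ c = 2 ∨ c = 3 ∨ c = 4 ∨ c = 5 := by omega
  · exact isUniversal_one_two_one
  · exact isUniversal_one_right_two (by norm_num) (by norm_num)
  · exact isUniversal_one_two_three
  · exact isUniversal_one_two_four
  · exact absurd h10 <| not_represents_of_forall_ne (by norm_num) (by norm_num) (by norm_num)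
      le_rfl (by decide)

end SmallValues

theorem stmt_1 (a b c : ℕ) (ha : 0 < a) (hb : 0 < b) (hc : 0 < c) (hab : a ≤ b)
    (h : ∀ n ∈ ({1, 2, 3, 5, 6, 10} : Set ℕ), ∃ x y z w : ℤ,
      (n : ℤ) = a * x ^ 2 + b * y ^ 2 + c * (z ^ 2 + z * w + w ^ 2)) :
    ∀ n : ℕ, ∃ x y z w : ℤ,
      (n : ℤ) = a * x ^ 2 + b * y ^ 2 + c * (z ^ 2 + z * w + w ^ 2) := by
  suffices IsUniversal a b c from fun n => this (Int.natCast_nonneg n)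
  have h1 : Represents a b c 1 := h 1 (by simp)
  have h2 : Represents a b c 2 := h 2 (by simp)
  have h3 : Represents a b c 3 := h 3 (by simp)
  have h5 : Represents a b c 5 := h 5 (by simp)
  have h6 : Represents a b c 6 := h 6 (by simp)
  have h10 : Represents a b c 10 := h 10 (by simp)
  zify at ha hb hc hab
  clear h
  generalize (a : ℤ) = a, (b : ℤ) = b, (c : ℤ) = c at *
  obtain ⟨rfl, rfl⟩ | ⟨rfl, rfl | rfl | hb2⟩ := eq_of_represents_one_two ha hab hc h1 h2
  · exact isUniversal_of_represents_ten hab h10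
  · exact isUniversal_of_represents_six hab h6
  · exact isUniversal_of_represents_five hab h5
  obtain rfl | rfl : b = 1 ∨ b = 2 := by omega
  · exact isUniversal_of_represents_three_six hc h3 h6
  · exact isUniversal_of_represents_five_ten hc h5 h10
end

section
/- A nonnegative integer n can be written as x² + (y² + y·z + z²) with x, y, z ∈ ℤ if and only if n is not of the form 9^k·(9·l + 6) for nonnegative integers k and l. -/
/-!
Write `f = x² + (y² + yz + z²)`, a ternary form of half-discriminant 3.

If `3 ∣ f(x, y, z)`, then `3 ∣ x` and `3 ∣ y - z`, so that `f(x, y, z) ≡ 3z²` modulo 9. Hence `f`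
does not represent `9l + 6`, and it represents `9n` exactly when it represents `n`.

For the converse, Hermite reduction shows that `f` is the only positive definite ternary form of
half-discriminant 3 up to equivalence, so it is enough to find some such form representing `n`.
If `p` is prime, `4mt = cp + r` and `-t` is a square modulo `p`, say `ap = b² + t`, then
`ax² + 2bxy + cxz + py² + cmz²` has half-discriminant `cr` and represents `cm`. Dirichlet's theorem
provides `p`, and quadratic reciprocity shows that `-t` is a square:

* for `n` prime to 3, with `c = 1`, `r = 3` and `p ≡ 4n - 3` modulo `12n`;
* for `n = 3(3k + 1)`, with `c = 3`, `r = 1` and `p ≡ 4k + 1` modulo `4(3k + 1)`.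
-/

/-! ### Hermite reduction of ternary forms -/

theorem exists_add_mul_two_mul_mem_Ioc {q : ℤ} (hq : 0 < q) (r : ℤ) :
    ∃ k, r + k * (2 * q) ∈ Set.Ioc (-q) q := by
  obtain ⟨k, hk, -⟩ := existsUnique_add_zsmul_mem_Ioc (by positivity : 0 < 2 * q) r (-q)
  rw [smul_eq_mul, show -q + 2 * q = q by ring] at hk
  exact ⟨k, hk⟩

/-- The integral ternary quadratic form with each field the coefficient of the monomial it is named
after; the cross coefficients `xy`, `xz`, `yz` may be odd. -/
structure TernaryForm where
  (xx xy xz yy yz zz : ℤ)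

namespace TernaryForm

/-- The value of the form at `(x, y, z)`. -/
def eval (g : TernaryForm) (x y z : ℤ) : ℤ :=
  g.xx * x ^ 2 + g.xy * x * y + g.xz * x * z + g.yy * y ^ 2 + g.yz * y * z + g.zz * z ^ 2

/-- The set of integers represented by the form. -/
def values (g : TernaryForm) : Set ℤ :=
  {n | ∃ x y z, g.eval x y z = n}

/-- The half-discriminant: half the determinant of the Hessian matrix, hence an integer. -/
def disc (g : TernaryForm) : ℤ :=
  4 * g.xx * g.yy * g.zz + g.xy * g.xz * g.yz
    - g.xx * g.yz ^ 2 - g.yy * g.xz ^ 2 - g.zz * g.xy ^ 2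

/-- The coefficient of `y²` in the binary form
`4 * g.xx * g.eval x y z - (2 * g.xx * x + g.xy * y + g.xz * z) ^ 2`, the Schur complement of `g.xx`
up to scaling. -/
def schurYY (g : TernaryForm) : ℤ := 4 * g.xx * g.yy - g.xy ^ 2

/-- Half the coefficient of `yz` in the binary form of `schurYY`. -/
def schurYZ (g : TernaryForm) : ℤ := 2 * g.xx * g.yz - g.xy * g.xz

/-- The coefficient of `z²` in the binary form of `schurYY`. -/
def schurZZ (g : TernaryForm) : ℤ := 4 * g.xx * g.zz - g.xz ^ 2

theorem schurYY_mul_schurZZ_sub_sq (g : TernaryForm) :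
    g.schurYY * g.schurZZ - g.schurYZ ^ 2 = 4 * g.xx * g.disc := by
  unfold schurYY schurZZ schurYZ disc
  ring

/-- Positive definiteness, encoded by Sylvester's criterion: up to positive factors, the fields are
the leading principal minors of the Hessian matrix. -/
structure IsPosDef (g : TernaryForm) : Prop where
  xx_pos : 0 < g.xx
  schurYY_pos : 0 < g.schurYY
  disc_pos : 0 < g.disc

theorem IsPosDef.yy_pos {g : TernaryForm} (hg : g.IsPosDef) : 0 < g.yy := by
  have h : 0 < 4 * g.xx * g.yy - g.xy ^ 2 := hg.schurYY_pos
  have hx := hg.xx_pos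
  exact pos_of_mul_pos_right (by linarith [sq_nonneg g.xy] : 0 < 4 * g.xx * g.yy) (by positivity)

theorem IsPosDef.schurZZ_pos {g : TernaryForm} (hg : g.IsPosDef) : 0 < g.schurZZ := by
  have hdisc : 0 < 4 * g.xx * g.disc := by
    have := hg.xx_pos
    have := hg.disc_pos
    positivity
  exact pos_of_mul_pos_right
    (by linarith [g.schurYY_mul_schurZZ_sub_sq, sq_nonneg g.schurYZ]) hg.schurYY_pos.le

/-- The form obtained by exchanging the variables `x` and `y`. -/
def swapXY (g : TernaryForm) : TernaryForm := ⟨g.yy, g.xy, g.yz, g.xx, g.xz, g.zz⟩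

/-- The form obtained by exchanging the variables `y` and `z`. -/
def swapYZ (g : TernaryForm) : TernaryForm := ⟨g.xx, g.xz, g.xy, g.zz, g.yz, g.yy⟩

/-- The form obtained by the substitution `x ↦ x + iy + jz`. -/
def shearX (g : TernaryForm) (i j : ℤ) : TernaryForm where
  xx := g.xx
  xy := g.xy + i * (2 * g.xx)
  xz := g.xz + j * (2 * g.xx)
  yy := g.yy + i * g.xy + i ^ 2 * g.xx
  yz := g.yz + i * g.xz + j * g.xy + 2 * i * j * g.xx
  zz := g.zz + j * g.xz + j ^ 2 * g.xx

/-- The form obtained by the substitution `y ↦ y + kz`. -/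
def shearY (g : TernaryForm) (k : ℤ) : TernaryForm where
  xx := g.xx
  xy := g.xy
  xz := g.xz + k * g.xy
  yy := g.yy
  yz := g.yz + 2 * k * g.yy
  zz := g.zz + k * g.yz + k ^ 2 * g.yy

section Substitutions

variable (g : TernaryForm) (i j k : ℤ)

@[simp]
theorem disc_swapXY : g.swapXY.disc = g.disc := by
  simp only [disc, swapXY]; ring

@[simp]
theorem disc_swapYZ : g.swapYZ.disc = g.disc := by
  simp only [disc, swapYZ]; ring

@[simp]
theorem disc_shearX : (g.shearX i j).disc = g.disc := by
  simp only [disc, shearX]; ring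

@[simp]
theorem disc_shearY : (g.shearY k).disc = g.disc := by
  simp only [disc, shearY]; ring

@[simp]
theorem schurYY_swapXY : g.swapXY.schurYY = g.schurYY := by
  simp only [schurYY, swapXY]; ring

@[simp]
theorem schurYY_shearX : (g.shearX i j).schurYY = g.schurYY := by
  simp only [schurYY, shearX]; ring

@[simp]
theorem schurYZ_shearX : (g.shearX i j).schurYZ = g.schurYZ := by
  simp only [schurYZ, shearX]; ring

theorem schurYZ_shearY : (g.shearY k).schurYZ = g.schurYZ + k * g.schurYY := by
  simp only [schurYZ, schurYY, shearY]; ring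

theorem eval_swapXY (x y z : ℤ) : g.swapXY.eval x y z = g.eval y x z := by
  simp only [eval, swapXY]; ring

theorem eval_swapYZ (x y z : ℤ) : g.swapYZ.eval x y z = g.eval x z y := by
  simp only [eval, swapYZ]; ring

theorem eval_shearX (x y z : ℤ) :
    (g.shearX i j).eval x y z = g.eval (x + i * y + j * z) y z := by
  simp only [eval, shearX]; ring

theorem eval_shearY (x y z : ℤ) : (g.shearY k).eval x y z = g.eval x (y + k * z) z := by
  simp only [eval, shearY]; ring

@[simp]
theorem values_swapXY : g.swapXY.values = g.values := by
  ext n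
  simp only [values, eval_swapXY, Set.mem_ofPred_eq]
  exact exists_comm

@[simp]
theorem values_swapYZ : g.swapYZ.values = g.values := by
  ext n
  simp only [values, eval_swapYZ, Set.mem_ofPred_eq]
  exact exists_congr fun x => exists_comm

@[simp]
theorem values_shearX : (g.shearX i j).values = g.values := by
  refine Set.Subset.antisymm ?_ ?_ <;> rintro _ ⟨x, y, z, rfl⟩
  · exact ⟨_, y, z, (g.eval_shearX i j x y z).symm⟩
  · exact ⟨x - i * y - j * z, y, z, by rw [eval_shearX]; ring_nf⟩

@[simp]
theorem values_shearY : (g.shearY k).values = g.values := by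
  refine Set.Subset.antisymm ?_ ?_ <;> rintro _ ⟨x, y, z, rfl⟩
  · exact ⟨x, _, z, (g.eval_shearY k x y z).symm⟩
  · exact ⟨x, y - k * z, z, by rw [eval_shearY]; ring_nf⟩

end Substitutions

/-- Size reduction: the coefficients that shears move by multiples of `2 * g.xx`, respectively
`2 * g.schurYY`, are the representatives in a half-open interval centred at 0. -/
structure IsSizeReduced (g : TernaryForm) : Prop where
  xy_mem : g.xy ∈ Set.Ioc (-g.xx) g.xx
  xz_mem : g.xz ∈ Set.Ioc (-g.xx) g.xx
  schurYZ_mem : 2 * g.schurYZ ∈ Set.Ioc (-g.schurYY) g.schurYY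

/-- Hermite-reduced forms: positive definite, size-reduced, and such that neither `swapXY` nor
`swapYZ` lowers `g.xx` or `g.schurYY`. -/
structure IsReduced (g : TernaryForm) : Prop extends g.IsPosDef, g.IsSizeReduced where
  xx_le_yy : g.xx ≤ g.yy
  schurYY_le_schurZZ : g.schurYY ≤ g.schurZZ

theorem IsPosDef.exists_isSizeReduced {g : TernaryForm} (hg : g.IsPosDef) :
    ∃ g' : TernaryForm, g'.IsSizeReduced ∧ g'.xx = g.xx ∧ g'.schurYY = g.schurYY ∧
      g'.disc = g.disc ∧ g'.values = g.values := by
  obtain ⟨k, hk⟩ := exists_add_mul_two_mul_mem_Ioc hg.schurYY_pos (2 * g.schurYZ)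
  obtain ⟨i, hi⟩ := exists_add_mul_two_mul_mem_Ioc hg.xx_pos (g.shearY k).xy
  obtain ⟨j, hj⟩ := exists_add_mul_two_mul_mem_Ioc hg.xx_pos (g.shearY k).xz
  have hYY : ((g.shearY k).shearX i j).schurYY = g.schurYY := schurYY_shearX _ i j
  refine ⟨(g.shearY k).shearX i j, ⟨hi, hj, ?_⟩, rfl, hYY, by simp, by simp⟩
  rw [hYY, schurYZ_shearX, schurYZ_shearY]
  convert hk using 1
  ring

theorem IsPosDef.exists_isReduced {g : TernaryForm} (hg : g.IsPosDef) :
    ∃ g' : TernaryForm, g'.IsReduced ∧ g'.disc = g.disc ∧ g'.values = g.values := by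
  obtain ⟨h, hsize, hxx, hYY, hdisc, hvalues⟩ := hg.exists_isSizeReduced
  have hh : h.IsPosDef := ⟨hxx ▸ hg.xx_pos, hYY ▸ hg.schurYY_pos, hdisc ▸ hg.disc_pos⟩
  rw [← hdisc, ← hvalues]
  by_cases hyz : h.schurZZ < h.schurYY
  · have hswap : h.swapYZ.IsPosDef :=
      ⟨hh.xx_pos, hh.schurZZ_pos, h.disc_swapYZ.symm ▸ hh.disc_pos⟩
    simpa using hswap.exists_isReduced
  by_cases hxy : h.yy < h.xx
  · have hswap : h.swapXY.IsPosDef :=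
      ⟨hh.yy_pos, h.schurYY_swapXY.symm ▸ hh.schurYY_pos, h.disc_swapXY.symm ▸ hh.disc_pos⟩
    simpa using hswap.exists_isReduced
  exact ⟨h, ⟨hh, hsize, not_lt.1 hxy, not_lt.1 hyz⟩, rfl, rfl⟩
termination_by (g.xx.toNat, g.schurYY.toNat)
decreasing_by
  · rw [← hxx, ← hYY]
    have := hh.schurYY_pos
    exact Prod.Lex.right _ (by change h.schurZZ.toNat < _; omega)
  · rw [← hxx]
    have := hh.xx_pos
    exact Prod.Lex.left _ _ (by change h.yy.toNat < _; omega)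

namespace IsReduced

variable {g : TernaryForm}

theorem three_mul_xx_sq_le_schurYY (hg : g.IsReduced) : 3 * g.xx ^ 2 ≤ g.schurYY := by
  have hxy : g.xy ^ 2 ≤ g.xx ^ 2 := sq_le_sq' hg.xy_mem.1.le hg.xy_mem.2
  have hyy : g.xx * g.xx ≤ g.xx * g.yy := mul_le_mul_of_nonneg_left hg.xx_le_yy hg.xx_pos.le
  unfold schurYY
  linarith

theorem three_mul_schurYY_sq_le (hg : g.IsReduced) : 3 * g.schurYY ^ 2 ≤ 16 * g.xx * g.disc := by
  have hYZ : (2 * g.schurYZ) ^ 2 ≤ g.schurYY ^ 2 :=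
    sq_le_sq' hg.schurYZ_mem.1.le hg.schurYZ_mem.2
  have hZZ : g.schurYY * g.schurYY ≤ g.schurYY * g.schurZZ :=
    mul_le_mul_of_nonneg_left hg.schurYY_le_schurZZ hg.schurYY_pos.le
  linarith [g.schurYY_mul_schurZZ_sub_sq]

theorem xx_cube_le (hg : g.IsReduced) : 27 * g.xx ^ 3 ≤ 16 * g.disc := by
  have hx := hg.xx_pos
  refine le_of_mul_le_mul_left ?_ hx
  calc g.xx * (27 * g.xx ^ 3) = 3 * (3 * g.xx ^ 2) ^ 2 := by ring
    _ ≤ 3 * g.schurYY ^ 2 := by gcongr; exact hg.three_mul_xx_sq_le_schurYY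
    _ ≤ 16 * g.xx * g.disc := hg.three_mul_schurYY_sq_le
    _ = g.xx * (16 * g.disc) := by ring

end IsReduced

/-- The form `x² + (y² + yz + z²)`: a square plus the norm form of the Eisenstein integers. -/
def sqAddEisenstein : TernaryForm := ⟨1, 0, 0, 1, 1, 1⟩

theorem IsReduced.eq_of_disc_eq_three {g : TernaryForm} (hg : g.IsReduced) (h : g.disc = 3) :
    g = sqAddEisenstein ∨ g = sqAddEisenstein.swapXY ∨ g = sqAddEisenstein.swapXY.swapYZ := by
  have hxx : g.xx = 1 := by nlinarith [hg.xx_cube_le, hg.xx_pos, sq_nonneg g.xx]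
  have hYY : g.schurYY ≤ 4 := by nlinarith [hg.three_mul_schurYY_sq_le]
  have hpos := hg.schurYY_pos
  obtain ⟨hxy, hxz, hYZ⟩ := hg.toIsSizeReduced
  obtain ⟨xx, xy, xz, yy, yz, zz⟩ := g
  simp only [schurYY, schurYZ, disc, sqAddEisenstein, swapXY, swapYZ, Set.mem_Ioc,
    TernaryForm.mk.injEq] at *
  subst hxx
  obtain ⟨hxy0, hxy1⟩ := hxy
  obtain ⟨hxz0, hxz1⟩ := hxz
  interval_cases xy <;> interval_cases xz
  all_goals
    obtain rfl : yy = 1 := by omega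
    have : -1 ≤ yz := by omega
    have : yz ≤ 1 := by omega
    interval_cases yz <;> omega

theorem IsPosDef.values_eq_of_disc_eq_three {g : TernaryForm} (hg : g.IsPosDef)
    (h : g.disc = 3) : g.values = sqAddEisenstein.values := by
  obtain ⟨g', hred, hdisc, hvalues⟩ := hg.exists_isReduced
  rw [← hvalues]
  rcases hred.eq_of_disc_eq_three (hdisc.trans h) with rfl | rfl | rfl <;> simp

end TernaryForm

/-! ### Representations from primes in arithmetic progressions -/

section Dirichlet

open NumberTheorySymbols

theorem jacobiSym_eq_of_four_mul_dvd_add {n q r : ℕ} (hr : Odd r) (hrn : r ≤ 4 * n)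
    (h : 4 * n ∣ q + r) : J(n | q) = J(r | 4 * n - r) := by
  have hq : Odd q := by
    obtain ⟨t, ht⟩ := (Dvd.intro _ rfl : 4 ∣ 4 * n).trans h
    grind
  have hodd : Odd (4 * n - r) := by grind
  have hmod : q ≡ 4 * n - r [MOD 4 * n] := by
    refine Nat.ModEq.add_right_cancel' r ?_
    rw [Nat.sub_add_cancel hrn]
    exact (Nat.modEq_zero_iff_dvd.2 h).trans (Nat.modEq_zero_iff_dvd.2 dvd_rfl).symm
  calc J(n | q) = J(n | 4 * n - r) := by
        rw [jacobiSym.mod_right' n hq, hmod, ← jacobiSym.mod_right' n hodd]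
    _ = J(4 * n | 4 * n - r) := by rw [jacobiSym.mul_left, jacobiSym.at_four hodd, one_mul]
    _ = J(r | 4 * n - r) :=
        (jacobiSym.mod_left' (Int.modEq_iff_dvd.2 ⟨1, by push_cast [hrn]; ring⟩)).symm

theorem exists_mul_eq_sq_add {p : ℕ} {t : ℤ} (h : IsSquare ((-t : ℤ) : ZMod p)) :
    ∃ a b : ℤ, a * p = b ^ 2 + t := by
  obtain ⟨s, hs⟩ := h
  obtain ⟨b, rfl⟩ := ZMod.intCast_surjective s
  obtain ⟨a, ha⟩ : (p : ℤ) ∣ b ^ 2 + t := by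
    rw [← ZMod.intCast_zmod_eq_zero_iff_dvd]
    push_cast at hs ⊢
    linear_combination -hs
  exact ⟨a, b, by rw [ha, mul_comm]⟩

theorem jacobiSym_eq_one_of_mul_sq_eq_one {a b : ℤ} {q : ℕ} (h : J(a * b ^ 2 | q) = 1) :
    J(a | q) = 1 := by
  rw [jacobiSym.mul_left, jacobiSym.pow_left] at h
  rcases jacobiSym.trichotomy b q with hb | hb | hb <;> simp_all

theorem exists_prime_four_mul_dvd_add_three {n : ℕ} (h3 : ¬ 3 ∣ n) :
    ∃ p : ℕ, p.Prime ∧ 4 * n ∣ p + 3 ∧ p ≡ n [MOD 3] := by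
  have hn : 0 < n := Nat.pos_of_ne_zero (by rintro rfl; simp at h3)
  have h4n : (4 * n).Coprime 3 :=
    Nat.Coprime.mul_left (by norm_num) ((Nat.prime_three.coprime_iff_not_dvd).2 h3).symm
  have hcop : (4 * n - 3).Coprime (4 * n * 3) :=
    ((Nat.coprime_self_sub_left (by omega)).2 h4n.symm).mul_right
      ((Nat.coprime_sub_self_left (by omega)).2 h4n)
  obtain ⟨p, -, hp, hmod⟩ := Nat.forall_exists_prime_gt_and_modEq 0 (by omega) hcop
  refine ⟨p, hp, ?_, (hmod.of_mul_left (4 * n)).trans ?_⟩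
  · refine (((hmod.of_mul_right 3).add_right 3).dvd_iff dvd_rfl).2 ?_
    rw [Nat.sub_add_cancel (by omega)]
  · change (4 * n - 3) % 3 = n % 3
    omega

theorem jacobiSym_neg_three_mul_eq_one {n p : ℕ} (h3 : ¬ 3 ∣ n) (hdvd : 4 * n ∣ p + 3)
    (hmod : p ≡ n [MOD 3]) : J(-(3 * n) | p) = 1 := by
  have hn : 0 < n := Nat.pos_of_ne_zero (by rintro rfl; simp at h3)
  have hp4 : p % 4 = 1 := by
    have : 4 ∣ p + 3 := (Dvd.intro _ rfl).trans hdvd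
    omega
  have hnp : J(n | p) = J(n | 3) := calc
    J(n | p) = J((3 : ℕ) | 4 * n - 3) :=
      jacobiSym_eq_of_four_mul_dvd_add (by decide) (by omega) hdvd
    _ = J((4 * n - 3 : ℕ) | 3) :=
      jacobiSym.quadratic_reciprocity_one_mod_four' (by decide) (by omega)
    _ = J(n | 3) := jacobiSym.mod_left' (by omega)
  have h3p : J(-3 | p) = J(n | 3) := calc
    J(-3 | p) = J((3 : ℕ) | p) := by
      rw [jacobiSym.neg _ (Nat.odd_iff.2 (by omega)), ZMod.χ₄_nat_one_mod_four hp4, one_mul,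
        Nat.cast_ofNat]
    _ = J(p | 3) := jacobiSym.quadratic_reciprocity_one_mod_four' (by decide) hp4
    _ = J(n | 3) := jacobiSym.mod_left' (by exact_mod_cast hmod)
  rw [← neg_mul, jacobiSym.mul_left, h3p, hnp, ← sq]
  exact jacobiSym.sq_one
    ((Int.gcd_natCast_natCast n 3).trans ((Nat.prime_three.coprime_iff_not_dvd).2 h3).symm)

namespace TernaryForm

theorem exists_isPosDef_disc_eq_mul {c m p r : ℕ} (hc : 0 < c) (hr : 0 < r) (hp : p.Prime)
    (hdvd : 4 * m ∣ c * p + r) (hJ : J(-(r * m) | p) = 1) :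
    ∃ g : TernaryForm, g.IsPosDef ∧ g.disc = c * r ∧ (c * m : ℤ) ∈ g.values := by
  have : Fact p.Prime := ⟨hp⟩
  obtain ⟨t, ht⟩ := hdvd
  have ht0 : 0 < t := Nat.pos_of_ne_zero (by rintro rfl; omega)
  have htz : (c * p + r : ℤ) = 4 * m * t := by exact_mod_cast ht
  have hmod : -t * (2 * m) ^ 2 ≡ -(r * m) [ZMOD p] :=
    Int.modEq_iff_dvd.2 ⟨c * m, by linear_combination -m * htz⟩
  have htJ : J(-t | p) = 1 :=
    jacobiSym_eq_one_of_mul_sq_eq_one ((jacobiSym.mod_left' hmod).trans hJ)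
  obtain ⟨a, b, hab⟩ := exists_mul_eq_sq_add (ZMod.isSquare_of_jacobiSym_eq_one htJ)
  have ha : 0 < a := pos_of_mul_pos_left (b := (p : ℤ)) (by rw [hab]; positivity) (by positivity)
  have hdisc : (⟨a, 2 * b, c, p, 0, c * m⟩ : TernaryForm).disc = c * r := by
    simp only [disc]
    linear_combination 4 * c * m * hab - c * htz
  refine ⟨⟨a, 2 * b, c, p, 0, c * m⟩, ⟨ha, ?_, ?_⟩, hdisc, 0, 0, 1, by simp [eval]⟩
  · have : 4 * a * p - (2 * b) ^ 2 = 4 * t := by linear_combination 4 * hab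
    simp only [schurYY]
    omega
  · rw [hdisc]
    positivity

theorem mul_mem_values_sqAddEisenstein {c m p r : ℕ} (hcr : c * r = 3) (hp : p.Prime)
    (hdvd : 4 * m ∣ c * p + r) (hJ : J(-(r * m) | p) = 1) :
    (c * m : ℤ) ∈ sqAddEisenstein.values := by
  have hcr0 : 0 < c * r := by omega
  obtain ⟨g, hg, hdisc, hmem⟩ := exists_isPosDef_disc_eq_mul (Nat.pos_of_mul_pos_right hcr0)
    (Nat.pos_of_mul_pos_left hcr0) hp hdvd hJ
  rwa [hg.values_eq_of_disc_eq_three (hdisc.trans (by exact_mod_cast hcr))] at hmem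

theorem mem_values_sqAddEisenstein_of_not_three_dvd {n : ℕ} (h3 : ¬ 3 ∣ n) :
    (n : ℤ) ∈ sqAddEisenstein.values := by
  obtain ⟨p, hp, hdvd, hmod⟩ := exists_prime_four_mul_dvd_add_three h3
  simpa using mul_mem_values_sqAddEisenstein (c := 1) rfl hp (by rwa [one_mul])
    (jacobiSym_neg_three_mul_eq_one h3 hdvd hmod)

theorem nine_mul_add_three_mem_values_sqAddEisenstein (k : ℕ) :
    (9 * k + 3 : ℤ) ∈ sqAddEisenstein.values := by
  have hcop : (4 * k + 1).Coprime (4 * (3 * k + 1)) := by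
    rw [show 4 * (3 * k + 1) = 3 * (4 * k + 1) + 1 by ring]
    simp
  obtain ⟨p, -, hp, hpmod⟩ := Nat.forall_exists_prime_gt_and_modEq 0 (by omega) hcop
  have hdvd : 4 * (3 * k + 1) ∣ 3 * p + 1 :=
    (((hpmod.mul_left 3).add_right 1).dvd_iff dvd_rfl).2 ⟨1, by ring⟩
  have hp4 : p % 4 = 1 := by
    have : 4 ∣ 3 * p + 1 := (Dvd.intro _ rfl).trans hdvd
    omega
  have h3p : J((3 * k + 1 : ℕ) | 3 * p) = 1 := by
    rw [jacobiSym_eq_of_four_mul_dvd_add odd_one (by omega) hdvd, Nat.cast_one,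
      jacobiSym.one_left]
  have h3 : J((3 * k + 1 : ℕ) | 3) = 1 := by
    rw [← jacobiSym.one_left 3]
    exact jacobiSym.mod_left' (by omega)
  have hJ : J(-((1 : ℕ) * (3 * k + 1 : ℕ)) | p) = 1 := by
    rw [Nat.cast_one, one_mul, jacobiSym.neg _ (Nat.odd_iff.2 (by omega)),
      ZMod.χ₄_nat_one_mod_four hp4, one_mul]
    rwa [jacobiSym.mul_right' _ three_ne_zero hp.ne_zero, h3, one_mul] at h3p
  convert mul_mem_values_sqAddEisenstein (c := 3) rfl hp hdvd hJ using 1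
  push_cast
  ring

end TernaryForm

end Dirichlet

/-! ### Descent modulo 9 -/

namespace TernaryForm

theorem mem_values_sqAddEisenstein {n : ℤ} :
    n ∈ sqAddEisenstein.values ↔ ∃ x y z : ℤ, n = x ^ 2 + (y ^ 2 + y * z + z ^ 2) := by
  have heval (x y z : ℤ) : sqAddEisenstein.eval x y z = x ^ 2 + (y ^ 2 + y * z + z ^ 2) := by
    simp only [eval, sqAddEisenstein]
    ring
  simp only [values, heval, Set.mem_ofPred_eq, eq_comm]

theorem three_dvd_of_three_dvd_sq_add {x y z : ℤ}
    (h : 3 ∣ x ^ 2 + (y ^ 2 + y * z + z ^ 2)) : 3 ∣ x ∧ 3 ∣ y - z := by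
  have anisotropic : ∀ u v : ZMod 3, u ^ 2 + v ^ 2 = 0 → u = 0 ∧ v = 0 := by decide
  have hsq : 3 ∣ x ^ 2 + (y - z) ^ 2 := by
    rw [show x ^ 2 + (y - z) ^ 2 = x ^ 2 + (y ^ 2 + y * z + z ^ 2) - 3 * (y * z) by ring]
    exact h.sub (dvd_mul_right 3 _)
  have hdvd (a : ℤ) : ((a : ℤ) : ZMod 3) = 0 ↔ 3 ∣ a := ZMod.intCast_zmod_eq_zero_iff_dvd a 3
  rw [← hdvd] at hsq
  simp only [← hdvd]
  exact anisotropic _ _ (by exact_mod_cast hsq)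

theorem sq_add_modEq_three_mul_sq {x y z : ℤ} (h : 3 ∣ x ^ 2 + (y ^ 2 + y * z + z ^ 2)) :
    x ^ 2 + (y ^ 2 + y * z + z ^ 2) ≡ 3 * z ^ 2 [ZMOD 9] := by
  obtain ⟨⟨u, hu⟩, ⟨w, hw⟩⟩ := three_dvd_of_three_dvd_sq_add h
  obtain rfl : y = z + 3 * w := by linarith
  subst hu
  exact (Int.modEq_iff_dvd.2 ⟨u ^ 2 + w * z + w ^ 2, by ring⟩).symm

theorem nine_mul_mem_values_sqAddEisenstein_iff {n : ℤ} :
    9 * n ∈ sqAddEisenstein.values ↔ n ∈ sqAddEisenstein.values := by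
  simp only [mem_values_sqAddEisenstein]
  constructor
  · rintro ⟨x, y, z, h⟩
    have h3 : 3 ∣ x ^ 2 + (y ^ 2 + y * z + z ^ 2) := ⟨3 * n, by rw [← h]; ring⟩
    obtain ⟨⟨u, rfl⟩, ⟨w, hw⟩⟩ := three_dvd_of_three_dvd_sq_add h3
    obtain ⟨v, rfl⟩ : 3 ∣ z := by
      have hmod := (sq_add_modEq_three_mul_sq h3).dvd
      exact Int.prime_three.dvd_of_dvd_pow (n := 2) (by omega)
    obtain rfl : y = 3 * (v + w) := by linarith
    exact ⟨u, v + w, v, by linarith⟩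
  · rintro ⟨x, y, z, rfl⟩
    exact ⟨3 * x, 3 * y, 3 * z, by ring⟩

theorem nine_mul_add_six_notMem_values_sqAddEisenstein (l : ℤ) :
    9 * l + 6 ∉ sqAddEisenstein.values := by
  rw [mem_values_sqAddEisenstein]
  rintro ⟨x, y, z, h⟩
  have h3 : 3 ∣ x ^ 2 + (y ^ 2 + y * z + z ^ 2) := ⟨3 * l + 2, by rw [← h]; ring⟩
  have hmod := (sq_add_modEq_three_mul_sq h3).dvd
  have hz : z ^ 2 % 3 = 2 := by omega
  have hsq : z ^ 2 % 3 = 0 ∨ z ^ 2 % 3 = 1 := by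
    rcases (by omega : z % 3 = 0 ∨ z % 3 = 1 ∨ z % 3 = 2) with h0 | h1 | h2 <;>
      simp [pow_two, Int.mul_emod, *]
  omega

theorem nine_pow_mul_notMem_values_sqAddEisenstein (k l : ℕ) :
    ((9 ^ k * (9 * l + 6) : ℕ) : ℤ) ∉ sqAddEisenstein.values := by
  induction k with
  | zero => simpa using nine_mul_add_six_notMem_values_sqAddEisenstein l
  | succ k ih =>
    rwa [pow_succ', mul_assoc, Nat.cast_mul, Nat.cast_ofNat,
      nine_mul_mem_values_sqAddEisenstein_iff]

theorem mem_values_sqAddEisenstein_of_not_exists_nine_pow_mul (n : ℕ)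
    (h : ¬ ∃ k l : ℕ, n = 9 ^ k * (9 * l + 6)) : (n : ℤ) ∈ sqAddEisenstein.values := by
  induction n using Nat.strong_induction_on with | _ n ih =>
  rcases n.eq_zero_or_pos with rfl | hn
  · exact mem_values_sqAddEisenstein.2 ⟨0, 0, 0, rfl⟩
  by_cases h3 : 3 ∣ n
  · obtain ⟨m, hm | hm | hm⟩ : ∃ m, n = 9 * m ∨ n = 9 * m + 3 ∨ n = 9 * m + 6 :=
      ⟨n / 9, by omega⟩
    · rw [hm, Nat.cast_mul, Nat.cast_ofNat, nine_mul_mem_values_sqAddEisenstein_iff]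
      refine ih m (by omega) ?_
      rintro ⟨k, l, rfl⟩
      exact h ⟨k + 1, l, by rw [hm, pow_succ', mul_assoc]⟩
    · simpa [hm] using nine_mul_add_three_mem_values_sqAddEisenstein m
    · exact absurd ⟨0, m, by rw [hm, pow_zero, one_mul]⟩ h
  · exact mem_values_sqAddEisenstein_of_not_three_dvd h3

end TernaryForm

theorem stmt_3 (n : ℕ) :
    (∃ x y z : ℤ, (n : ℤ) = x ^ 2 + (y ^ 2 + y * z + z ^ 2)) ↔
    ¬ ∃ k l : ℕ, n = 9 ^ k * (9 * l + 6) := by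
  rw [← TernaryForm.mem_values_sqAddEisenstein]
  refine ⟨?_, TernaryForm.mem_values_sqAddEisenstein_of_not_exists_nine_pow_mul n⟩
  rintro h ⟨k, l, rfl⟩
  exact TernaryForm.nine_pow_mul_notMem_values_sqAddEisenstein k l h
end
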